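/- Nonuniqueness of level-set structure (Example 4.7, radial solutions): let Ω ⊂ ℝ² be the union of the quarter-disk B(0,2) ∩ {x,y>0} with B((2,1),√5) ∩ {x≤0} and B((1,2),√5) ∩ {y≤0}, Γ = ∂Ω ∩ ({xy<0} ∪ {(0,0)}), and f = 1 for x < 0, f = 0 for x > 0 on Γ. In polar coordinates (r,θ), for every nondecreasing BV function g : [0,π/2] → [0,1], the function u(r,θ) = 0 for θ<0, g(θ) for θ∈[0,π/2], 1 for θ>π/2 satisfies the 1-Laplace conditions with the vector field z(r,θ) = (0,1) for θ<0, ê_θ (unit angular vector (−sin θ, cos θ)) for θ∈[0,π/2], (−1,0) for θ>π/2: |z| ≤ 1, div z = 0 in D'(Ω), (z,Du)=|Du| as measures, [z,ν] ∈ sign(f−u) on Γ, [z,ν]=0 on ∂Ω∖Γ. -/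

import Mathlib

open Set MeasureTheory Filter Topology Real
open scoped RealInnerProductSpace Classical

abbrev E2 := EuclideanSpace ℝ (Fin 2)

/-- `z` is divergence-free in `𝒟'(Ω)`. -/
def DivFreeOn (Ω : Set E2) (z : E2 → E2) : Prop :=
  ∀ ϕ : E2 → ℝ, ContDiff ℝ (⊤ : ℕ∞) ϕ → HasCompactSupport ϕ →
    tsupport ϕ ⊆ Ω → ∫ x in Ω, ⟪z x, gradient ϕ x⟫ = 0

/-- The divergence of a vector field on `ℝ²`. -/
noncomputable def div2 (w : E2 → E2) (x : E2) : ℝ :=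
  ∑ i : Fin 2, fderiv ℝ w x (EuclideanSpace.single i 1) i

/-- The polar angle `θ` of a planar point. -/
noncomputable def theta (p : E2) : ℝ := Complex.arg ((p 0 : ℂ) + (p 1 : ℂ) * Complex.I)

/-- Rotation of a planar vector by 90 degrees; `rot p / ‖p‖` is the unit angular
vector `ê_θ = (−sin θ, cos θ)` at `p`. -/
noncomputable def rot (d : E2) : E2 :=
  EuclideanSpace.single (0 : Fin 2) (-(d 1)) + EuclideanSpace.single (1 : Fin 2) (d 0)

/-!
Being monotone, `g` is almost everywhere the distribution function of a probability measure `ν` on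
`[0, π/2]`, so that `u` is almost everywhere the superposition of the indicators of `s ≤ θ`
weighted by `ν(ds)`. The boundary of `{s ≤ θ}` in `Ω` is the ray `θ = s`, whose unit normal is
`z = ê_θ`. By the divergence theorem on these sets, `(z, Du)` is length on the rays integrated
against `ν`; so is `|Du|`, because the single field `-ê_θ` is optimal in the definition of the
total variation for all rays at once. The field `z` is tangent to `∂Ω` except on the arcs in `x < 0`
and in `y < 0`, where its flux is `± dy` and `± dx` and thus at most length. Near those arcs `u` is
constant and equal to `f`, so that the sign condition there reduces to `|[z, ν]| ≤ 1`.
-/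

section MeasureIntegral

variable {α : Type*} [MeasurableSpace α] {μ : Measure α} {ϕ : α → ℝ} {A : Set α}

lemma measure_le_ofReal_integral (hA : MeasurableSet A) (hϕ : Integrable ϕ μ)
    (hnonneg : 0 ≤ ϕ) (hone : ∀ x ∈ A, 1 ≤ ϕ x) : μ A ≤ ENNReal.ofReal (∫ x, ϕ x ∂μ) := by
  rw [ofReal_integral_eq_lintegral_ofReal hϕ (ae_of_all μ hnonneg), ← lintegral_indicator_one hA]
  exact lintegral_mono (indicator_le fun x hx => by simpa using hone x hx)

lemma ofReal_integral_le_measure (hA : MeasurableSet A) (hϕ : Integrable ϕ μ)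
    (hone : ∀ x, ϕ x ≤ 1) (hzero : ∀ x ∉ A, ϕ x ≤ 0) :
    ENNReal.ofReal (∫ x, ϕ x ∂μ) ≤ μ A := by
  calc ENNReal.ofReal (∫ x, ϕ x ∂μ)
      ≤ ENNReal.ofReal (∫ x, max (ϕ x) 0 ∂μ) :=
        ENNReal.ofReal_le_ofReal (integral_mono hϕ hϕ.pos_part fun _ => le_max_left _ _)
    _ = ∫⁻ x, ENNReal.ofReal (max (ϕ x) 0) ∂μ :=
        ofReal_integral_eq_lintegral_ofReal hϕ.pos_part (ae_of_all μ fun _ => le_max_right _ _)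
    _ ≤ ∫⁻ x, A.indicator 1 x ∂μ := lintegral_mono fun x => by
        by_cases hx : x ∈ A
        · simpa [hx] using hone x
        · simpa [hx] using hzero x hx
    _ = μ A := lintegral_indicator_one hA

lemma integral_measureReal_Iic_mul [SFinite μ] {ν : Measure ℝ} [IsFiniteMeasure ν] {θ h : α → ℝ}
    (hθ : Measurable θ) (hh : Integrable h μ) :
    ∫ x, ν.real (Iic (θ x)) * h x ∂μ = ∫ s, ∫ x in {x | s ≤ θ x}, h x ∂μ ∂ν := by
  have hset : MeasurableSet {q : α × ℝ | q.2 ≤ θ q.1} :=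
    measurableSet_le measurable_snd (hθ.comp measurable_fst)
  have hinner (x : α) : ν.real (Iic (θ x)) * h x
      = ∫ s, {q : α × ℝ | q.2 ≤ θ q.1}.indicator (fun q => h q.1) (x, s) ∂ν := by
    have hslice : (fun s => {q : α × ℝ | q.2 ≤ θ q.1}.indicator (fun q => h q.1) (x, s))
        = (Iic (θ x)).indicator fun _ => h x := rfl
    rw [hslice, integral_indicator measurableSet_Iic, setIntegral_const, smul_eq_mul]
  have hint : Integrable ({q : α × ℝ | q.2 ≤ θ q.1}.indicator fun q => h q.1) (μ.prod ν) :=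
    (hh.comp_fst ν).indicator hset
  simp_rw [hinner]
  refine (integral_integral_swap (f := fun x s =>
    {q : α × ℝ | q.2 ≤ θ q.1}.indicator (fun q => h q.1) (x, s)) hint).trans
    (integral_congr_ae (ae_of_all ν fun s => ?_))
  exact integral_indicator (measurableSet_le measurable_const hθ)

lemma restrict_eq_of_forall_isOpen {X : Type*} [TopologicalSpace X] [MeasurableSpace X]
    [BorelSpace X] {μ ν : Measure X} [IsFiniteMeasure ν] {U : Set X} (hU : IsOpen U)
    (h : ∀ A, IsOpen A → A ⊆ U → μ A = ν A) : μ.restrict U = ν.restrict U := by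
  have hopen (A : Set X) (hA : IsOpen A) : μ.restrict U A = ν.restrict U A := by
    rw [Measure.restrict_apply hA.measurableSet, Measure.restrict_apply hA.measurableSet,
      h _ (hA.inter hU) inter_subset_right]
  have : IsFiniteMeasure (μ.restrict U) := ⟨by
    rw [hopen _ isOpen_univ]
    exact measure_lt_top _ _⟩
  exact ext_of_generate_finite _ BorelSpace.measurable_eq isPiSystem_isOpen hopen
    (hopen _ isOpen_univ)

lemma ae_rnDeriv_eq_zero_of_measure_eq_zero {μ ν : Measure α} {s : Set α}
    (hs : MeasurableSet s) (h : μ s = 0) : ∀ᵐ x ∂ν, x ∈ s → μ.rnDeriv ν x = 0 := by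
  have hzero : ∫⁻ x in s, μ.rnDeriv ν x ∂ν = 0 :=
    le_antisymm ((Measure.setLIntegral_rnDeriv_le s).trans h.le) zero_le
  exact (ae_restrict_iff' hs).1
    ((lintegral_eq_zero_iff (Measure.measurable_rnDeriv μ ν)).1 hzero)

lemma measure_le_of_forall_isCompact {X : Type*} [PseudoMetricSpace X] [ProperSpace X]
    [MeasurableSpace X] {μ : Measure X} {U : Set X} (hU : IsOpen U) {C : ENNReal}
    (h : ∀ K, IsCompact K → K ⊆ U → μ K ≤ C) : μ U ≤ C := by
  obtain ⟨F, hF, hFU, hunion, hmono⟩ := hU.exists_iUnion_isClosed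
  obtain rfl | ⟨x, -⟩ := U.eq_empty_or_nonempty
  · simp
  have hexhaust : ⋃ n : ℕ, F n ∩ Metric.closedBall x n = U := by
    rw [iUnion_inter_of_monotone hmono
      fun m n hmn => Metric.closedBall_subset_closedBall (by exact_mod_cast hmn),
      hunion, Metric.iUnion_closedBall_nat, inter_univ]
  have hmono' : Monotone fun n : ℕ => F n ∩ Metric.closedBall x n := fun m n hmn =>
    inter_subset_inter (hmono hmn) (Metric.closedBall_subset_closedBall (by exact_mod_cast hmn))
  rw [← hexhaust, hmono'.measure_iUnion]
  exact iSup_le fun n => h _ ((isCompact_closedBall x n).inter_left (hF n))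
    (inter_subset_left.trans (hFU n))

end MeasureIntegral

section TestFunctions

lemma exists_contDiff_cutoff {E : Type*} [NormedAddCommGroup E] [NormedSpace ℝ E]
    [FiniteDimensional ℝ E] {K A : Set E} (hK : IsCompact K) (hA : IsOpen A) (hKA : K ⊆ A) :
    ∃ ϕ : E → ℝ, ContDiff ℝ (⊤ : ℕ∞) ϕ ∧ HasCompactSupport ϕ ∧ tsupport ϕ ⊆ A ∧
      (∀ x, ϕ x ∈ Icc 0 1) ∧ ∀ x ∈ K, ϕ x = 1 := by
  obtain ⟨L, hL, hKL, hLA⟩ := exists_compact_between hK hA hKA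
  obtain ⟨ϕ, hϕ, hrange, hsupport, hone⟩ := exists_contMDiff_support_eq_eq_one_iff
    (modelWithCornersSelf ℝ E) isOpen_interior hK.isClosed hKL
  have htsupport : tsupport ϕ ⊆ L :=
    closure_minimal (hsupport ▸ interior_subset) hL.isClosed
  exact ⟨ϕ, hϕ.contDiff, hL.of_isClosed_subset (isClosed_tsupport _) htsupport,
    htsupport.trans hLA, fun x => hrange (mem_range_self x), fun x hx => (hone x).1 hx⟩

section Agreement

variable {E : Type*} [NormedAddCommGroup E] [NormedSpace ℝ E] [FiniteDimensional ℝ E]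
  [MeasurableSpace E] [BorelSpace E] {μ ν : Measure E} {A U : Set E}

lemma measure_le_of_integral_eq (hA : IsOpen A)
    (hμ : ∀ ϕ : E → ℝ, ContDiff ℝ (⊤ : ℕ∞) ϕ → HasCompactSupport ϕ → tsupport ϕ ⊆ A →
      Integrable ϕ μ)
    (hν : ∀ ϕ : E → ℝ, ContDiff ℝ (⊤ : ℕ∞) ϕ → HasCompactSupport ϕ → tsupport ϕ ⊆ A →
      Integrable ϕ ν)
    (h : ∀ ϕ : E → ℝ, ContDiff ℝ (⊤ : ℕ∞) ϕ → HasCompactSupport ϕ → tsupport ϕ ⊆ A →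
      ∫ x, ϕ x ∂μ = ∫ x, ϕ x ∂ν) : μ A ≤ ν A := by
  refine measure_le_of_forall_isCompact hA fun K hK hKA => ?_
  obtain ⟨ϕ, hϕ, hc, hsupp, h01, hone⟩ := exists_contDiff_cutoff hK hA hKA
  calc μ K ≤ ENNReal.ofReal (∫ x, ϕ x ∂μ) :=
        measure_le_ofReal_integral hK.measurableSet (hμ ϕ hϕ hc hsupp) (fun x => (h01 x).1)
          fun x hx => (hone x hx).ge
    _ = ENNReal.ofReal (∫ x, ϕ x ∂ν) := by rw [h ϕ hϕ hc hsupp]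
    _ ≤ ν A := ofReal_integral_le_measure hA.measurableSet (hν ϕ hϕ hc hsupp)
        (fun x => (h01 x).2) fun x hx =>
          (image_eq_zero_of_notMem_tsupport fun h' => hx (hsupp h')).le

variable [IsFiniteMeasure ν]

lemma exists_contDiff_integral_ne_zero (hU : IsOpen U) (hνU : ν U ≠ 0) :
    ∃ ψ : E → ℝ, ContDiff ℝ (⊤ : ℕ∞) ψ ∧ HasCompactSupport ψ ∧ tsupport ψ ⊆ U ∧
      ∫ x, ψ x ∂ν ≠ 0 := by
  by_contra! hzero
  refine hνU (nonpos_iff_eq_zero.1 (measure_le_of_forall_isCompact hU fun K hK hKU => ?_))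
  obtain ⟨ϕ, hϕ, hc, hsupp, h01, hone⟩ := exists_contDiff_cutoff hK hU hKU
  simpa [hzero ϕ hϕ hc hsupp] using measure_le_ofReal_integral hK.measurableSet
    (hϕ.continuous.integrable_of_hasCompactSupport (μ := ν) hc) (fun x => (h01 x).1)
    fun x hx => (hone x hx).ge

-- Since `ν U ≠ 0`, some test function has a nonzero integral; adding it to `ϕ` if need be rules
-- out that `∫ ϕ ∂μ` is the junk value `0` of a nonintegrable function.
lemma integrable_of_forall_integral_eq (hU : IsOpen U) (hνU : ν U ≠ 0)
    (h : ∀ ϕ : E → ℝ, ContDiff ℝ (⊤ : ℕ∞) ϕ → HasCompactSupport ϕ → tsupport ϕ ⊆ U →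
      ∫ x, ϕ x ∂μ = ∫ x, ϕ x ∂ν)
    {ϕ : E → ℝ} (hϕ : ContDiff ℝ (⊤ : ℕ∞) ϕ) (hc : HasCompactSupport ϕ)
    (hsupp : tsupport ϕ ⊆ U) : Integrable ϕ μ := by
  have hne {χ : E → ℝ} (hχ : ContDiff ℝ (⊤ : ℕ∞) χ) (hχc : HasCompactSupport χ)
      (hχU : tsupport χ ⊆ U) (hχν : ∫ x, χ x ∂ν ≠ 0) : Integrable χ μ :=
    .of_integral_ne_zero (by rwa [h χ hχ hχc hχU])
  obtain ⟨ψ, hψ, hψc, hψU, hψν⟩ := exists_contDiff_integral_ne_zero hU hνU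
  by_cases hϕν : ∫ x, ϕ x ∂ν = 0
  · have hsum : ∫ x, (ϕ + ψ) x ∂ν ≠ 0 := by
      rw [integral_add' (hϕ.continuous.integrable_of_hasCompactSupport hc)
        (hψ.continuous.integrable_of_hasCompactSupport hψc), hϕν, zero_add]
      exact hψν
    have hsumμ : Integrable (ϕ + ψ) μ := hne (hϕ.add hψ) (hc.add hψc)
      ((tsupport_add ϕ ψ).trans (union_subset hsupp hψU)) hsum
    simpa using hsumμ.sub (hne hψ hψc hψU hψν)
  · exact hne hϕ hc hsupp hϕν

theorem measure_eq_of_forall_integral_contDiff_eq (hU : IsOpen U) (hνU : ν U ≠ 0)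
    (h : ∀ ϕ : E → ℝ, ContDiff ℝ (⊤ : ℕ∞) ϕ → HasCompactSupport ϕ → tsupport ϕ ⊆ U →
      ∫ x, ϕ x ∂μ = ∫ x, ϕ x ∂ν)
    (hA : IsOpen A) (hAU : A ⊆ U) : μ A = ν A := by
  have hμ (ϕ : E → ℝ) (hϕ : ContDiff ℝ (⊤ : ℕ∞) ϕ) (hc : HasCompactSupport ϕ)
      (hsupp : tsupport ϕ ⊆ A) : Integrable ϕ μ :=
    integrable_of_forall_integral_eq hU hνU h hϕ hc (hsupp.trans hAU)
  have hν (ϕ : E → ℝ) (hϕ : ContDiff ℝ (⊤ : ℕ∞) ϕ) (hc : HasCompactSupport ϕ)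
      (_ : tsupport ϕ ⊆ A) : Integrable ϕ ν :=
    hϕ.continuous.integrable_of_hasCompactSupport hc
  exact le_antisymm
    (measure_le_of_integral_eq hA hμ hν fun ϕ hϕ hc hs => h ϕ hϕ hc (hs.trans hAU))
    (measure_le_of_integral_eq hA hν hμ fun ϕ hϕ hc hs => (h ϕ hϕ hc (hs.trans hAU)).symm)

end Agreement

section Duality

variable {E : Type*} [NormedAddCommGroup E] [InnerProductSpace ℝ E] {A : Set E}

lemma contDiff_smul_of_tsupport_subset {ϕ : E → ℝ} {η : E → E} {n : WithTop ℕ∞} (hA : IsOpen A)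
    (hϕ : ContDiff ℝ n ϕ) (hsupp : tsupport ϕ ⊆ A) (hη : ContDiffOn ℝ n η A) :
    ContDiff ℝ n fun x => ϕ x • η x := by
  refine contDiff_iff_contDiffAt.2 fun x => ?_
  by_cases hx : x ∈ tsupport ϕ
  · exact hϕ.contDiffAt.smul (hη.contDiffAt (hA.mem_nhds (hsupp hx)))
  · exact contDiffAt_const.congr_of_eventuallyEq
      (notMem_tsupport_iff_eventuallyEq.1 fun h => hx (tsupport_smul_subset_left ϕ η h))

variable [MeasurableSpace E] [BorelSpace E] [FiniteDimensional ℝ E]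

lemma integrable_inner_of_hasCompactSupport {M : Measure E} [IsFiniteMeasureOnCompacts M]
    {w η : E → E} (hw : Continuous w) (hc : HasCompactSupport w) (hη : Measurable η)
    (hη1 : ∀ x, ‖η x‖ ≤ 1) : Integrable (fun x => ⟪w x, η x⟫) M :=
  (hw.integrable_of_hasCompactSupport hc).mono (hw.measurable.inner hη).aestronglyMeasurable
    (ae_of_all M fun x => (norm_inner_le_norm (w x) (η x)).trans
      (mul_le_of_le_one_right (norm_nonneg _) (hη1 x)))

theorem iSup_ofReal_integral_inner_eq_measure {M : Measure E} [IsFiniteMeasureOnCompacts M]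
    {η : E → E} (hA : IsOpen A) (hmeas : Measurable η) (hη1 : ∀ x, ‖η x‖ ≤ 1)
    (hη : ContDiffOn ℝ 1 η A) (hunit : ∀ x ∈ A, ‖η x‖ = 1) :
    ⨆ w : {w : E → E // ContDiff ℝ 1 w ∧ HasCompactSupport w ∧ tsupport w ⊆ A ∧ ∀ x, ‖w x‖ ≤ 1},
      ENNReal.ofReal (∫ x, ⟪w.1 x, η x⟫ ∂M) = M A := by
  apply le_antisymm
  · refine iSup_le fun ⟨w, hw, hc, hsupp, hw1⟩ => ofReal_integral_le_measure hA.measurableSet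
      (integrable_inner_of_hasCompactSupport hw.continuous hc hmeas hη1) (fun x => ?_)
      fun x hx => ?_
    · exact (real_inner_le_norm _ _).trans (mul_le_one₀ (hw1 x) (norm_nonneg _) (hη1 x))
    · simp [image_eq_zero_of_notMem_tsupport fun h => hx (hsupp h)]
  · refine measure_le_of_forall_isCompact hA fun K hK hKA => ?_
    obtain ⟨ϕ, hϕ, hc, hsupp, h01, hone⟩ := exists_contDiff_cutoff hK hA hKA
    have hpair (x : E) : ⟪ϕ x • η x, η x⟫ = ϕ x := by
      by_cases hx : x ∈ A
      · simp [real_inner_smul_left, hunit x hx]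
      · simp [image_eq_zero_of_notMem_tsupport fun h => hx (hsupp h)]
    have hw1 (x : E) : ‖ϕ x • η x‖ ≤ 1 := by
      rw [norm_smul, Real.norm_of_nonneg (h01 x).1]
      exact mul_le_one₀ (h01 x).2 (norm_nonneg _) (hη1 x)
    refine le_iSup_of_le ⟨fun x => ϕ x • η x,
      contDiff_smul_of_tsupport_subset hA (contDiff_infty.1 hϕ 1) hsupp hη, hc.smul_right,
      (tsupport_smul_subset_left ϕ η).trans hsupp, hw1⟩ ?_
    simp only [hpair]
    exact measure_le_ofReal_integral hK.measurableSet
      (hϕ.continuous.integrable_of_hasCompactSupport hc) (fun x => (h01 x).1)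
      fun x hx => (hone x hx).ge

end Duality

end TestFunctions

section Lines

variable {E : Type*} [NormedAddCommGroup E] [NormedSpace ℝ E] {F : E → ℝ}

lemma hasDerivAt_comp_line (hF : ContDiff ℝ 1 F) (q e : E) (s : ℝ) :
    HasDerivAt (fun s : ℝ => F (q + s • e)) (fderiv ℝ F (q + s • e) e) s := by
  have hline : HasDerivAt (fun s : ℝ => q + s • e) e s := by
    simpa using ((hasDerivAt_id s).smul_const e).const_add q
  exact (hF.differentiable one_ne_zero _).hasFDerivAt.comp_hasDerivAt s hline

lemma hasCompactSupport_comp_line (hc : HasCompactSupport F) (q : E) {e : E} (he : ‖e‖ = 1) :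
    HasCompactSupport fun s : ℝ => F (q + s • e) := by
  have hisom : Isometry fun s : ℝ => q + s • e := Isometry.of_dist_eq fun s t => by
    rw [dist_add_left, dist_eq_norm, ← sub_smul, norm_smul, he, mul_one, dist_eq_norm]
  exact hc.comp_isClosedEmbedding hisom.isClosedEmbedding

lemma integral_Ici_fderiv_line (hF : ContDiff ℝ 1 F) (hc : HasCompactSupport F) (q : E) {e : E}
    (he : ‖e‖ = 1) (a : ℝ) : ∫ s in Ici a, fderiv ℝ F (q + s • e) e = -F (q + a • e) := by
  have hline : ContDiff ℝ 1 fun s : ℝ => F (q + s • e) := by fun_prop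
  rw [integral_Ici_eq_integral_Ioi,
    ← (hasCompactSupport_comp_line hc q he).integral_Ioi_deriv_eq hline a]
  exact integral_congr_ae (ae_of_all _ fun s => (hasDerivAt_comp_line hF q e s).deriv.symm)

lemma integral_fderiv_line (hF : ContDiff ℝ 1 F) (hc : HasCompactSupport F) (q : E) {e : E}
    (he : ‖e‖ = 1) : ∫ s : ℝ, fderiv ℝ F (q + s • e) e = 0 := by
  have hline : ContDiff ℝ 1 fun s : ℝ => F (q + s • e) := by fun_prop
  have hsupp := hasCompactSupport_comp_line hc q he
  have hderiv : deriv (fun s : ℝ => F (q + s • e)) = fun s => fderiv ℝ F (q + s • e) e :=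
    funext fun s => (hasDerivAt_comp_line hF q e s).deriv
  refine integral_eq_zero_of_hasDerivAt_of_integrable (hasDerivAt_comp_line hF q e) ?_
    (hline.continuous.integrable_of_hasCompactSupport hsupp)
  rw [← hderiv]
  exact (hline.continuous_deriv le_rfl).integrable_of_hasCompactSupport hsupp.deriv

lemma integral_Ioo_fderiv_line (hF : ContDiff ℝ 1 F) (q e : E) {a b : ℝ} (hab : a ≤ b) :
    ∫ s in Ioo a b, fderiv ℝ F (q + s • e) e = F (q + b • e) - F (q + a • e) := by
  have hcont : Continuous fun s : ℝ => fderiv ℝ F (q + s • e) e :=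
    ((hF.continuous_fderiv one_ne_zero).comp (by fun_prop)).clm_apply continuous_const
  rw [← integral_Ioc_eq_integral_Ioo, ← intervalIntegral.integral_of_le hab]
  exact intervalIntegral.integral_eq_sub_of_hasDerivAt
    (fun s _ => hasDerivAt_comp_line hF q e s) (hcont.intervalIntegrable a b)

end Lines

section Frames

variable {E : Type*} [NormedAddCommGroup E] [InnerProductSpace ℝ E]
  (b : OrthonormalBasis (Fin 2) ℝ E) (i : Fin 2)

lemma inner_frame (s t : ℝ) : ⟪b i, t • b i.rev + s • b i⟫ = s := by
  have hne : i ≠ i.rev := by fin_cases i <;> decide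
  simp [inner_add_right, inner_smul_right, b.inner_eq_zero hne]

variable [MeasurableSpace E] [BorelSpace E]

lemma measurableSet_halfPlane (e : E) : MeasurableSet {p : E | 0 ≤ ⟪e, p⟫} :=
  (isClosed_le continuous_const (continuous_const.inner continuous_id)).measurableSet

variable [FiniteDimensional ℝ E]

lemma exists_measurableEquiv_frame : ∃ e : ℝ × ℝ ≃ᵐ E,
    (∀ q, e q = q.1 • b i.rev + q.2 • b i) ∧ MeasurePreserving e := by
  let b' := b.reindex (Equiv.swap 1 i)
  have hb0 : b' 0 = b i.rev := by fin_cases i <;> simp [b']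
  have hb1 : b' 1 = b i := by fin_cases i <;> simp [b']
  refine ⟨MeasurableEquiv.finTwoArrow.symm.trans ((MeasurableEquiv.toLp 2 (Fin 2 → ℝ)).trans
    b'.measurableEquiv.symm), fun q => ?_, ?_⟩
  · change b'.repr.symm (WithLp.toLp 2 ![q.1, q.2]) = _
    rw [← b'.sum_repr_symm]
    simp [hb0, hb1]
  · exact b'.measurePreserving_measurableEquiv.symm.comp
      ((PiLp.volume_preserving_toLp (Fin 2)).comp (volume_preserving_finTwoArrow ℝ).symm)

lemma integral_eq_integral_frame {F : E → ℝ} (hF : Integrable F) :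
    ∫ p, F p = ∫ t : ℝ, ∫ s : ℝ, F (t • b i.rev + s • b i) := by
  obtain ⟨e, he, hmp⟩ := exists_measurableEquiv_frame b i
  have hint : Integrable (F ∘ e) (volume.prod volume) :=
    (hmp.integrable_comp hF.aestronglyMeasurable).2 hF
  rw [← hmp.integral_comp e.measurableEmbedding]
  exact (integral_prod _ hint).trans (by simp [he])

lemma integrable_fderiv_apply {F : E → ℝ} (hF : ContDiff ℝ 1 F) (hc : HasCompactSupport F)
    (e : E) : Integrable fun p => fderiv ℝ F p e :=
  ((hF.continuous_fderiv one_ne_zero).clm_apply continuous_const).integrable_of_hasCompactSupport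
    ((hc.fderiv ℝ).comp_left (g := fun L : E →L[ℝ] ℝ => L e) rfl)

lemma integral_halfPlane_fderiv_normal {F : E → ℝ} (hF : ContDiff ℝ 1 F)
    (hc : HasCompactSupport F) :
    ∫ p in {p | 0 ≤ ⟪b i, p⟫}, fderiv ℝ F p (b i) = -∫ t : ℝ, F (t • b i.rev) := by
  have hint := (integrable_fderiv_apply hF hc (b i)).indicator (measurableSet_halfPlane (b i))
  rw [← integral_indicator (measurableSet_halfPlane _), integral_eq_integral_frame b i hint,
    ← integral_neg]
  refine integral_congr_ae (ae_of_all _ fun t => ?_)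
  calc ∫ s : ℝ, {p | 0 ≤ ⟪b i, p⟫}.indicator (fun p => fderiv ℝ F p (b i))
          (t • b i.rev + s • b i)
      = ∫ s in Ici (0 : ℝ), fderiv ℝ F (t • b i.rev + s • b i) (b i) := by
        rw [← integral_indicator measurableSet_Ici]
        simp only [indicator, mem_ofPred_eq, inner_frame, mem_Ici]
    _ = -F (t • b i.rev) := by
        rw [integral_Ici_fderiv_line hF hc _ (b.norm_eq_one i), zero_smul, add_zero]

lemma integral_halfPlane_fderiv_tangent {F : E → ℝ} (hF : ContDiff ℝ 1 F)
    (hc : HasCompactSupport F) :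
    ∫ p in {p | 0 ≤ ⟪b i, p⟫}, fderiv ℝ F p (b i.rev) = 0 := by
  have hint := (integrable_fderiv_apply hF hc (b i.rev)).indicator
    (measurableSet_halfPlane (b i))
  rw [← integral_indicator (measurableSet_halfPlane _), integral_eq_integral_frame b i.rev hint]
  refine integral_eq_zero_of_ae (ae_of_all _ fun t => ?_)
  have hinner (s : ℝ) : ⟪b i, t • b i + s • b i.rev⟫ = t := by rw [add_comm, inner_frame]
  by_cases ht : 0 ≤ t
  · simpa [indicator, hinner, ht] using integral_fderiv_line hF hc (t • b i) (b.norm_eq_one _)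
  · simp [indicator, hinner, ht]

end Frames

lemma div2_eq_sum_inner (b : OrthonormalBasis (Fin 2) ℝ E2) (w : E2 → E2) (p : E2) :
    div2 w p = ∑ i, ⟪b i, fderiv ℝ w p (b i)⟫ := by
  rw [div2, ← (fderiv ℝ w p).coe_coe, ← LinearMap.trace_eq_sum_inner _ b,
    LinearMap.trace_eq_sum_inner _ (EuclideanSpace.basisFun (Fin 2) ℝ)]
  simp [EuclideanSpace.basisFun_apply, EuclideanSpace.inner_single_left]

theorem integral_halfPlane_div2 (b : OrthonormalBasis (Fin 2) ℝ E2) (i : Fin 2) {w : E2 → E2}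
    (hw : ContDiff ℝ 1 w) (hc : HasCompactSupport w) :
    ∫ p in {p | 0 ≤ ⟪b i, p⟫}, div2 w p = -∫ t : ℝ, ⟪b i, w (t • b i.rev)⟫ := by
  have hcomp (j : Fin 2) : ContDiff ℝ 1 fun p => ⟪b j, w p⟫ := contDiff_const.inner ℝ hw
  have hcompc (j : Fin 2) : HasCompactSupport fun p => ⟪b j, w p⟫ :=
    hc.comp_left (g := fun v => ⟪b j, v⟫) (inner_zero_right _)
  have hfderiv (j : Fin 2) (p : E2) :
      ⟪b j, fderiv ℝ w p (b j)⟫ = fderiv ℝ (fun p => ⟪b j, w p⟫) p (b j) := by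
    simp [fderiv_inner_apply ℝ (differentiableAt_const _) (hw.differentiable one_ne_zero p)]
  have hsum (F : Fin 2 → ℝ) : ∑ j, F j = F i + F i.rev := by
    fin_cases i <;> simp [Fin.sum_univ_two, add_comm]
  have hint (j : Fin 2) := integrable_fderiv_apply (hcomp j) (hcompc j) (b j)
  simp_rw [div2_eq_sum_inner b, hfderiv]
  rw [integral_finsetSum _ fun j _ => (hint j).integrableOn, hsum,
    integral_halfPlane_fderiv_normal b i (hcomp i) (hcompc i)]
  have htangent := integral_halfPlane_fderiv_tangent b i (hcomp i.rev) (hcompc i.rev)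
  rw [htangent, add_zero]

section PolarCoordinates

/-- The unit vector with polar angle `s`. -/
noncomputable def radial (s : ℝ) : E2 := !₂[cos s, sin s]

/-- The unit angular vector field `ê_θ`; it takes the junk value `0` at the origin. -/
noncomputable def angularField (p : E2) : E2 := ‖p‖⁻¹ • rot p

lemma rot_apply_zero (p : E2) : rot p 0 = -p 1 := by simp [rot]

lemma rot_apply_one (p : E2) : rot p 1 = p 0 := by simp [rot]

lemma rot_smul (r : ℝ) (p : E2) : rot (r • p) = r • rot p := by
  ext i
  fin_cases i <;> simp [rot]

lemma contDiff_rot {n : WithTop ℕ∞} : ContDiff ℝ n rot := by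
  rw [contDiff_euclidean]
  intro i
  fin_cases i
  · simpa [rot_apply_zero] using (contDiff_piLp_apply 2).neg
  · simpa [rot_apply_one] using contDiff_piLp_apply 2

lemma norm_rot (p : E2) : ‖rot p‖ = ‖p‖ := by
  simp [EuclideanSpace.norm_eq, Fin.sum_univ_two, rot_apply_zero, rot_apply_one, add_comm]

lemma norm_radial (s : ℝ) : ‖radial s‖ = 1 := by
  simp [radial, EuclideanSpace.norm_eq]

lemma continuous_radial : Continuous radial :=
  (PiLp.continuous_toLp 2 _).comp (by fun_prop)

lemma hasDerivAt_radial (s : ℝ) : HasDerivAt radial (rot (radial s)) s := by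
  have hpi : HasDerivAt (fun s => ![cos s, sin s]) ![-sin s, cos s] s :=
    hasDerivAt_pi.2 fun i => by
      fin_cases i
      · exact hasDerivAt_cos s
      · exact hasDerivAt_sin s
  have hrot : rot (radial s) = WithLp.toLp 2 ![-sin s, cos s] := by
    ext i
    fin_cases i <;> simp [radial, rot]
  rw [hrot]
  exact (PiLp.continuousLinearEquiv 2 ℝ fun _ : Fin 2 => ℝ).symm.hasFDerivAt.comp_hasDerivAt s hpi

lemma exists_orthonormalBasis_rot {e : E2} (he : ‖e‖ = 1) :
    ∃ b : OrthonormalBasis (Fin 2) ℝ E2, b 0 = e ∧ b 1 = rot e := by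
  have horthogonal : ⟪e, rot e⟫ = 0 := by
    simp [PiLp.inner_apply, Fin.sum_univ_two, rot_apply_zero, rot_apply_one]
    ring
  have hon : Orthonormal ℝ ![e, rot e] := by
    simp [orthonormal_vecCons_iff, he, norm_rot, horthogonal]
  refine ⟨(basisOfOrthonormalOfCardEqFinrank hon (by simp)).toOrthonormalBasis
    (by simpa using hon), ?_, ?_⟩ <;> simp

lemma norm_angularField_le_one (p : E2) : ‖angularField p‖ ≤ 1 := by
  rw [angularField, norm_smul, norm_rot, norm_inv, norm_norm]
  exact inv_mul_le_one

lemma norm_angularField {p : E2} (hp : p ≠ 0) : ‖angularField p‖ = 1 := by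
  rw [angularField, norm_smul, norm_rot, norm_inv, norm_norm,
    inv_mul_cancel₀ (norm_ne_zero_iff.2 hp)]

lemma measurable_angularField : Measurable angularField :=
  measurable_norm.inv.smul (contDiff_rot (n := 0)).continuous.measurable

lemma contDiffOn_angularField {n : WithTop ℕ∞} : ContDiffOn ℝ n angularField {0}ᶜ :=
  fun _ hp => (((contDiffAt_norm ℝ hp).inv (norm_ne_zero_iff.2 hp)).smul
    contDiff_rot.contDiffAt).contDiffWithinAt

lemma angularField_smul_radial {r : ℝ} (hr : 0 < r) (s : ℝ) :
    angularField (r • radial s) = rot (radial s) := by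
  rw [angularField, norm_smul, norm_radial, rot_smul, smul_smul, Real.norm_of_nonneg hr.le,
    mul_one, inv_mul_cancel₀ hr.ne', one_smul]

lemma theta_smul_radial {r s : ℝ} (hr : 0 < r) (hs : s ∈ Ioc (-π) π) :
    theta (r • radial s) = s := by
  have hpolar : ((r • radial s) 0 : ℂ) + ((r • radial s) 1 : ℂ) * Complex.I
      = r * (Complex.cos s + Complex.sin s * Complex.I) := by
    simp [radial]
    ring
  rw [theta, hpolar, Complex.arg_mul_cos_add_sin_mul_I hr hs]

lemma norm_smul_radial_theta (p : E2) : ‖p‖ • radial (theta p) = p := by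
  have hnorm : ‖(p 0 : ℂ) + (p 1 : ℂ) * Complex.I‖ = ‖p‖ := by
    rw [Complex.norm_add_mul_I, EuclideanSpace.norm_eq]
    simp [Fin.sum_univ_two]
  ext i
  fin_cases i
  all_goals simp [radial, theta, ← hnorm]

lemma measurable_theta : Measurable theta :=
  Complex.measurable_arg.comp (by fun_prop : Continuous _).measurable

lemma theta_neg_iff {p : E2} : theta p < 0 ↔ p 1 < 0 := by
  simp [theta, Complex.arg_neg_iff]

lemma theta_le_pi_div_two_iff {p : E2} : theta p ≤ π / 2 ↔ 0 ≤ p 0 ∨ p 1 < 0 := by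
  simp [theta, Complex.arg_le_pi_div_two_iff]

lemma pi_div_two_lt_theta_iff {p : E2} : π / 2 < theta p ↔ p 0 < 0 ∧ 0 ≤ p 1 := by
  rw [← not_le, theta_le_pi_div_two_iff, not_or, not_le, not_lt]

lemma theta_mem_Icc_iff {p : E2} : theta p ∈ Icc 0 (π / 2) ↔ 0 ≤ p 0 ∧ 0 ≤ p 1 := by
  rw [mem_Icc, ← not_lt, theta_neg_iff, theta_le_pi_div_two_iff, not_lt]
  grind

lemma inner_rot_radial (p : E2) (s : ℝ) : ⟪rot (radial s), p⟫ = ‖p‖ * sin (theta p - s) := by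
  conv_lhs => rw [← norm_smul_radial_theta p]
  simp [PiLp.inner_apply, Fin.sum_univ_two, rot_apply_zero, rot_apply_one, radial, sin_sub]
  ring

lemma integral_eq_integral_polar (F : E2 → ℝ) :
    ∫ p, F p = ∫ q in Ioi (0 : ℝ) ×ˢ Ioo (-π) π, q.1 * F (q.1 • radial q.2) := by
  have hmp := Complex.orthonormalBasisOneI.measurePreserving_measurableEquiv
  rw [← hmp.integral_comp (MeasurableEquiv.measurableEmbedding _),
    ← Complex.integral_comp_polarCoord_symm]
  refine setIntegral_congr_fun (measurableSet_Ioi.prod measurableSet_Ioo) fun q _ => ?_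
  have hpoint : Complex.orthonormalBasisOneI.measurableEquiv (Complex.polarCoord.symm q)
      = q.1 • radial q.2 := by
    ext i
    fin_cases i <;>
      simp [radial, OrthonormalBasis.measurableEquiv, Complex.cos_ofReal_re, Complex.sin_ofReal_re]
  simp only [smul_eq_mul, hpoint]

/-- The circular sector of radius `R` between the polar angles `a` and `b`, without its apex. -/
def sector (R a b : ℝ) : Set E2 := {p | ‖p‖ ∈ Ioo 0 R ∧ theta p ∈ Icc a b}

lemma measurableSet_sector (R a b : ℝ) : MeasurableSet (sector R a b) :=
  (measurable_norm measurableSet_Ioo).inter (measurable_theta measurableSet_Icc)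

lemma smul_radial_mem_sector_iff {R a b : ℝ} {q : ℝ × ℝ} (hq : q ∈ Ioi (0 : ℝ) ×ˢ Ioo (-π) π) :
    q.1 • radial q.2 ∈ sector R a b ↔ q ∈ Ioo 0 R ×ˢ Icc a b := by
  obtain ⟨hr : 0 < q.1, hs⟩ := hq
  rw [sector, mem_ofPred_eq, theta_smul_radial hr (Ioo_subset_Ioc_self hs), norm_smul, norm_radial,
    mul_one, Real.norm_of_nonneg hr.le, mem_prod]

lemma integral_sector_eq_integral_prod (F : E2 → ℝ) {R a b : ℝ} (ha : -π < a) (hb : b < π) :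
    ∫ p in sector R a b, F p = ∫ q in Ioo 0 R ×ˢ Icc a b, q.1 * F (q.1 • radial q.2) := by
  have hindicator : ∀ q ∈ Ioi (0 : ℝ) ×ˢ Ioo (-π) π,
      q.1 * (sector R a b).indicator F (q.1 • radial q.2)
        = (Ioo 0 R ×ˢ Icc a b).indicator (fun q => q.1 * F (q.1 • radial q.2)) q := fun q hq => by
    simp only [indicator, smul_radial_mem_sector_iff hq, mul_ite, mul_zero]
  rw [← integral_indicator (measurableSet_sector R a b), integral_eq_integral_polar,
    setIntegral_congr_fun (measurableSet_Ioi.prod measurableSet_Ioo) hindicator,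
    setIntegral_indicator (measurableSet_Ioo.prod measurableSet_Icc),
    inter_eq_self_of_subset_right (Set.prod_mono Ioo_subset_Ioi_self (Icc_subset_Ioo ha hb))]

lemma hasDerivAt_comp_smul_radial {v : E2 → ℝ} (hv : ContDiff ℝ 1 v) (r s : ℝ) :
    HasDerivAt (fun s => v (r • radial s)) (r * fderiv ℝ v (r • radial s) (rot (radial s))) s := by
  have h := (hv.differentiable one_ne_zero (r • radial s)).hasFDerivAt.comp_hasDerivAt s
    ((hasDerivAt_radial s).const_smul r)
  rwa [map_smul, smul_eq_mul] at h

lemma continuous_radial_fderiv {v : E2 → ℝ} (hv : ContDiff ℝ 1 v) :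
    Continuous fun q : ℝ × ℝ => q.1 * fderiv ℝ v (q.1 • radial q.2) (rot (radial q.2)) := by
  have hradial : Continuous fun q : ℝ × ℝ => radial q.2 := continuous_radial.comp continuous_snd
  exact continuous_fst.mul (((hv.continuous_fderiv one_ne_zero).comp
    (continuous_fst.smul hradial)).clm_apply ((contDiff_rot (n := 0)).continuous.comp hradial))

theorem integral_sector_fderiv_angularField {v : E2 → ℝ} (hv : ContDiff ℝ 1 v) {R a b : ℝ}
    (ha : -π < a) (hab : a ≤ b) (hb : b < π) :
    ∫ p in sector R a b, fderiv ℝ v p (angularField p)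
      = ∫ r in Ioo 0 R, (v (r • radial b) - v (r • radial a)) := by
  have hcont := continuous_radial_fderiv hv
  have hint : IntegrableOn
      (fun q : ℝ × ℝ => q.1 * fderiv ℝ v (q.1 • radial q.2) (rot (radial q.2)))
      (Ioo 0 R ×ˢ Icc a b) (volume.prod volume) :=
    (hcont.continuousOn.integrableOn_compact (isCompact_Icc.prod isCompact_Icc)).mono_set
      (Set.prod_mono Ioo_subset_Icc_self Subset.rfl)
  rw [integral_sector_eq_integral_prod _ ha hb, setIntegral_congr_fun
      (measurableSet_Ioo.prod measurableSet_Icc)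
      fun q hq => congrArg (q.1 * fderiv ℝ v (q.1 • radial q.2) ·)
        (angularField_smul_radial hq.1.1 q.2),
    Measure.volume_eq_prod, setIntegral_prod _ hint]
  refine integral_congr_ae (ae_of_all _ fun r => integral_Icc_eq_integral_Ioc.trans ?_)
  rw [← intervalIntegral.integral_of_le hab]
  exact intervalIntegral.integral_eq_sub_of_hasDerivAt
    (fun s _ => hasDerivAt_comp_smul_radial hv r s)
    ((hcont.comp (by fun_prop : Continuous fun s => (r, s))).intervalIntegrable a b)

end PolarCoordinates

section Domain

/-- The domain `Ω` of the example: a quarter-disk with one circular cap along each axis. -/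
def fanDomain : Set E2 :=
  (Metric.ball (0 : E2) 2 ∩ {p : E2 | 0 < p 0 ∧ 0 < p 1}) ∪
      (Metric.ball (EuclideanSpace.single (0 : Fin 2) (2:ℝ) +
        EuclideanSpace.single (1 : Fin 2) (1:ℝ)) (Real.sqrt 5) ∩ {p : E2 | p 0 ≤ 0}) ∪
      (Metric.ball (EuclideanSpace.single (0 : Fin 2) (1:ℝ) +
        EuclideanSpace.single (1 : Fin 2) (2:ℝ)) (Real.sqrt 5) ∩ {p : E2 | p 1 ≤ 0})

variable {p : E2} {i : Fin 2}

lemma norm_lt_two_iff : ‖p‖ < 2 ↔ p 0 ^ 2 + p 1 ^ 2 < 4 := by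
  rw [EuclideanSpace.norm_eq, Real.sqrt_lt' two_pos, Fin.sum_univ_two, Real.norm_eq_abs,
    Real.norm_eq_abs, sq_abs, sq_abs]
  norm_num

lemma mem_fanDomain_iff : p ∈ fanDomain ↔ (p 0 ^ 2 + p 1 ^ 2 < 4 ∧ 0 < p 0 ∧ 0 < p 1) ∨
    ((p 0 - 2) ^ 2 + (p 1 - 1) ^ 2 < 5 ∧ p 0 ≤ 0) ∨
    ((p 0 - 1) ^ 2 + (p 1 - 2) ^ 2 < 5 ∧ p 1 ≤ 0) := by
  simp [fanDomain, norm_lt_two_iff, EuclideanSpace.dist_eq, Fin.sum_univ_two, or_assoc,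
    Real.sqrt_lt_sqrt_iff (add_nonneg (sq_nonneg _) (sq_nonneg _)), Real.dist_eq, sq_abs]

lemma mem_fanDomain_iff_of_nonpos (h : p i ≤ 0) :
    p ∈ fanDomain ↔ (p i - 2) ^ 2 + (p i.rev - 1) ^ 2 < 5 := by
  rw [mem_fanDomain_iff]
  fin_cases i
  · change p 0 ≤ 0 at h
    change _ ↔ (p 0 - 2) ^ 2 + (p 1 - 1) ^ 2 < 5
    refine ⟨?_, fun hdisk => .inr (.inl ⟨hdisk, h⟩)⟩
    rintro (⟨-, h0, -⟩ | ⟨hdisk, -⟩ | ⟨hdisk, h1⟩) <;> nlinarith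
  · change p 1 ≤ 0 at h
    change _ ↔ (p 1 - 2) ^ 2 + (p 0 - 1) ^ 2 < 5
    refine ⟨?_, fun hdisk => .inr (.inr ⟨by linarith, h⟩)⟩
    rintro (⟨-, -, h1⟩ | ⟨hdisk, h0⟩ | ⟨hdisk, -⟩) <;> nlinarith

lemma rev_pos_of_mem_fanDomain (hp : p ∈ fanDomain) (h : p i ≤ 0) : 0 < p i.rev := by
  have hdisk := (mem_fanDomain_iff_of_nonpos h).1 hp
  nlinarith [sq_nonneg (p i)]

lemma mem_fanDomain_iff_of_nonneg (h0 : 0 ≤ p 0) (h1 : 0 ≤ p 1) :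
    p ∈ fanDomain ↔ ‖p‖ ∈ Ioo 0 2 := by
  have hpos : 0 < ‖p‖ ↔ 0 < p 0 ^ 2 + p 1 ^ 2 := by
    rw [EuclideanSpace.norm_eq, Real.sqrt_pos, Fin.sum_univ_two, Real.norm_eq_abs,
      Real.norm_eq_abs, sq_abs, sq_abs]
  rw [mem_Ioo, hpos, norm_lt_two_iff, mem_fanDomain_iff]
  constructor
  · rintro (⟨h, h0', -⟩ | ⟨h, h0'⟩ | ⟨h, h1'⟩) <;> constructor <;> nlinarith
  · rintro ⟨hne, hlt⟩
    rcases h0.eq_or_lt with h0' | h0'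
    · exact .inr (.inl ⟨by nlinarith, h0'.ge⟩)
    · rcases h1.eq_or_lt with h1' | h1'
      · exact .inr (.inr ⟨by nlinarith, h1'.ge⟩)
      · exact .inl ⟨hlt, h0', h1'⟩

lemma norm_lt_two_of_mem_fanDomain (hp : p ∈ fanDomain) : ‖p‖ < 2 := by
  rw [norm_lt_two_iff]
  rcases mem_fanDomain_iff.1 hp with ⟨h, -, -⟩ | ⟨h, h0⟩ | ⟨h, h1⟩
  · exact h
  · nlinarith [sq_nonneg (p 0), sq_nonneg (p 1)]
  · nlinarith [sq_nonneg (p 0), sq_nonneg (p 1)]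

lemma ne_zero_of_mem_fanDomain (hp : p ∈ fanDomain) : p ≠ 0 := by
  rintro rfl
  simpa using rev_pos_of_mem_fanDomain (i := 0) hp le_rfl

lemma theta_mem_Ioo_of_mem_fanDomain (hp : p ∈ fanDomain) : theta p ∈ Ioo (-(π / 2)) π := by
  rw [theta, mem_Ioo, Complex.neg_pi_div_two_lt_arg_iff, Complex.arg_lt_pi_iff]
  have h0 : p 0 ≤ 0 → 0 < p 1 := rev_pos_of_mem_fanDomain (i := 0) hp
  simp only [Complex.add_re, Complex.ofReal_re, Complex.mul_re, Complex.I_re, mul_zero,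
    Complex.ofReal_im, Complex.I_im, mul_one, sub_self, add_zero, Complex.add_im, Complex.mul_im,
    zero_add, ne_eq]
  grind

lemma isOpen_fanDomain : IsOpen fanDomain := by
  have hdecomp : fanDomain = {p : E2 | p 0 ^ 2 + p 1 ^ 2 < 4} ∩ ({p : E2 | 0 < p 0 ∧ 0 < p 1} ∪
      {p : E2 | (p 0 - 2) ^ 2 + (p 1 - 1) ^ 2 < 5 ∧ 0 < p 1} ∪
      {p : E2 | (p 0 - 1) ^ 2 + (p 1 - 2) ^ 2 < 5 ∧ 0 < p 0}) := by
    ext p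
    constructor
    · intro hp
      refine ⟨norm_lt_two_iff.1 (norm_lt_two_of_mem_fanDomain hp), ?_⟩
      rcases mem_fanDomain_iff.1 hp with ⟨-, h⟩ | ⟨h, h0⟩ | ⟨h, h1⟩
      · exact .inl (.inl h)
      · exact .inl (.inr ⟨h, rev_pos_of_mem_fanDomain (i := 0) hp h0⟩)
      · exact .inr ⟨h, rev_pos_of_mem_fanDomain (i := 1) hp h1⟩
    · rintro ⟨h, (h01 | ⟨hdisk, h1⟩) | ⟨hdisk, h0⟩⟩
      · exact mem_fanDomain_iff.2 (.inl ⟨h, h01⟩)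
      · exact mem_fanDomain_iff.2 ((lt_or_ge 0 (p 0)).imp (⟨h, ·, h1⟩) (.inl ⟨hdisk, ·⟩))
      · exact mem_fanDomain_iff.2 ((lt_or_ge 0 (p 1)).imp (⟨h, h0, ·⟩) (.inr ⟨hdisk, ·⟩))
  rw [hdecomp]
  have hpos (i : Fin 2) : IsOpen {p : E2 | 0 < p i} := isOpen_lt (by fun_prop) (by fun_prop)
  have hball : IsOpen {p : E2 | p 0 ^ 2 + p 1 ^ 2 < 4} := isOpen_lt (by fun_prop) (by fun_prop)
  have hdisk (c d : ℝ) : IsOpen {p : E2 | (p 0 - c) ^ 2 + (p 1 - d) ^ 2 < 5} :=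
    isOpen_lt (by fun_prop) (by fun_prop)
  exact hball.inter ((((hpos 0).and (hpos 1)).union ((hdisk 2 1).and (hpos 1))).union
    ((hdisk 1 2).and (hpos 0)))

lemma integrableOn_of_continuous_of_subset_fanDomain {F : E2 → ℝ} (hF : Continuous F) {A : Set E2}
    (hA : A ⊆ fanDomain) : IntegrableOn F A :=
  (hF.continuousOn.integrableOn_compact (isCompact_closedBall 0 2)).mono_set
    fun _ hp => mem_closedBall_zero_iff.2 (norm_lt_two_of_mem_fanDomain (hA hp)).le

lemma smul_radial_mem_fanDomain_iff {r s : ℝ} (hs : s ∈ Icc 0 (π / 2)) :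
    r • radial s ∈ fanDomain ↔ r ∈ Ioo 0 2 := by
  have hcos : 0 ≤ cos s := cos_nonneg_of_mem_Icc ⟨by linarith [hs.1, pi_pos], hs.2⟩
  have hsin : 0 ≤ sin s := sin_nonneg_of_nonneg_of_le_pi hs.1 (by linarith [hs.2, pi_pos])
  rcases le_or_gt r 0 with hr | hr
  · refine iff_of_false (fun h => ?_) fun h => hr.not_gt h.1
    exact (mul_nonpos_of_nonpos_of_nonneg hr hsin).not_gt
      (rev_pos_of_mem_fanDomain (i := 0) h (mul_nonpos_of_nonpos_of_nonneg hr hcos))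
  · rw [mem_fanDomain_iff_of_nonneg (mul_nonneg hr.le hcos) (mul_nonneg hr.le hsin), norm_smul,
      norm_radial, mul_one, Real.norm_of_nonneg hr.le]

end Domain

section Caps

/-- The part of the domain `Ω` on the negative side of the coordinate `i`. -/
def fanCap (i : Fin 2) : Set E2 := {p | p ∈ fanDomain ∧ p i < 0}

/-- The nonpositive coordinate of the point of the circle `(x - 2)² + (t - 1)² = 5`. -/
noncomputable def arcAbscissa (t : ℝ) : ℝ := 2 - √(5 - (t - 1) ^ 2)

/-- The parametrization, by the coordinate `i.rev`, of the circular arc that bounds `fanCap i`. -/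
noncomputable def arcPoint (i : Fin 2) (t : ℝ) : E2 :=
  t • EuclideanSpace.single i.rev 1 + arcAbscissa t • EuclideanSpace.single i 1

lemma smul_single_add_smul_single_apply (i : Fin 2) (s t : ℝ) :
    (t • EuclideanSpace.single i.rev (1 : ℝ) + s • EuclideanSpace.single i 1 : E2) i = s := by
  fin_cases i <;> simp

lemma smul_single_add_smul_single_apply_rev (i : Fin 2) (s t : ℝ) :
    (t • EuclideanSpace.single i.rev (1 : ℝ) + s • EuclideanSpace.single i 1 : E2) i.rev = t := by
  fin_cases i <;> simp

lemma arcPoint_apply (i : Fin 2) (t : ℝ) : arcPoint i t i = arcAbscissa t :=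
  smul_single_add_smul_single_apply i _ t

lemma arcPoint_apply_rev (i : Fin 2) (t : ℝ) : arcPoint i t i.rev = t :=
  smul_single_add_smul_single_apply_rev i _ t

lemma continuous_arcAbscissa : Continuous arcAbscissa := by
  unfold arcAbscissa
  fun_prop

lemma continuous_arcPoint (i : Fin 2) : Continuous (arcPoint i) := by
  have := continuous_arcAbscissa
  unfold arcPoint
  fun_prop

lemma arcAbscissa_neg {t : ℝ} (ht : t ∈ Ioo 0 2) : arcAbscissa t < 0 :=
  sub_neg.2 (Real.lt_sqrt_of_sq_lt (by nlinarith [ht.1, ht.2]))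

lemma mem_fanCap_iff {i : Fin 2} {p : E2} :
    p ∈ fanCap i ↔ p i.rev ∈ Ioo 0 2 ∧ p i ∈ Ioo (arcAbscissa (p i.rev)) 0 := by
  rw [fanCap, mem_ofPred_eq, arcAbscissa, mem_Ioo (a := 2 - _), ← and_assoc, and_congr_left_iff]
  intro hneg
  rw [mem_fanDomain_iff_of_nonpos hneg.le, sub_lt_comm, Real.lt_sqrt (by linarith)]
  constructor
  · intro h
    exact ⟨⟨by nlinarith, by nlinarith⟩, by linarith⟩
  · rintro ⟨-, h⟩
    linarith

lemma smul_single_mem_fanCap_iff {i : Fin 2} {s t : ℝ} :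
    t • EuclideanSpace.single i.rev 1 + s • EuclideanSpace.single i 1 ∈ fanCap i ↔
      t ∈ Ioo 0 2 ∧ s ∈ Ioo (arcAbscissa t) 0 := by
  rw [mem_fanCap_iff, smul_single_add_smul_single_apply, smul_single_add_smul_single_apply_rev]

lemma measurableSet_fanCap (i : Fin 2) : MeasurableSet (fanCap i) :=
  isOpen_fanDomain.measurableSet.inter
    (isOpen_lt (by fun_prop : Continuous fun p : E2 => p i) continuous_const).measurableSet

end Caps

section Flux

/-- The field `z` of the example. -/
noncomputable def fanField (p : E2) : E2 :=
  if theta p < 0 then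
        EuclideanSpace.single (1 : Fin 2) (1:ℝ)
      else if theta p ≤ π/2 then ‖p‖⁻¹ • rot p
      else EuclideanSpace.single (0 : Fin 2) (-1:ℝ)

variable {p : E2} {v : E2 → ℝ} {s : ℝ}

lemma fanField_of_theta_mem (h : theta p ∈ Icc 0 (π / 2)) : fanField p = angularField p := by
  rw [fanField, if_neg h.1.not_gt, if_pos h.2, angularField]

lemma pi_div_two_lt_theta_of_mem_fanCap (h : p ∈ fanCap 0) : π / 2 < theta p :=
  pi_div_two_lt_theta_iff.2 ⟨h.2, (rev_pos_of_mem_fanDomain (i := 0) h.1 h.2.le).le⟩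

lemma fanField_of_mem_fanCap_zero (h : p ∈ fanCap 0) :
    fanField p = -EuclideanSpace.single 0 1 := by
  have htheta := pi_div_two_lt_theta_of_mem_fanCap h
  rw [fanField, if_neg (by linarith [pi_pos]), if_neg htheta.not_ge]
  ext i
  fin_cases i <;> simp

lemma fanField_of_mem_fanCap_one (h : p ∈ fanCap 1) : fanField p = EuclideanSpace.single 1 1 :=
  if_pos (theta_neg_iff.2 h.2)

lemma norm_fanField_le_one (p : E2) : ‖fanField p‖ ≤ 1 := by
  rw [fanField]
  split_ifs
  · simp
  · exact norm_angularField_le_one p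
  · simp

lemma measurable_fanField : Measurable fanField :=
  .ite (measurableSet_lt measurable_theta measurable_const) measurable_const
    (.ite (measurableSet_le measurable_theta measurable_const) measurable_angularField
      measurable_const)

lemma integrableOn_fderiv_fanField (hv : ContDiff ℝ 1 v) {A : Set E2} (hA : A ⊆ fanDomain) :
    IntegrableOn (fun p => fderiv ℝ v p (fanField p)) A := by
  have hcont : Continuous (fderiv ℝ v) := hv.continuous_fderiv one_ne_zero
  have hbound : IntegrableOn (fun p => ‖fderiv ℝ v p‖) A :=
    integrableOn_of_continuous_of_subset_fanDomain hcont.norm hA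
  have hmeas : Measurable fun p => fderiv ℝ v p (fanField p) :=
    isBoundedBilinearMap_apply.continuous.measurable.comp
      (hcont.measurable.prodMk measurable_fanField)
  exact hbound.mono' hmeas.aestronglyMeasurable (ae_of_all _ fun p =>
    (ContinuousLinearMap.le_opNorm _ _).trans
      (mul_le_of_le_one_right (norm_nonneg _) (norm_fanField_le_one p)))

lemma integral_fanCap_fderiv (hv : ContDiff ℝ 1 v) (i : Fin 2) :
    ∫ p in fanCap i, fderiv ℝ v p (EuclideanSpace.single i 1)
      = ∫ t in Ioo 0 2, (v (t • EuclideanSpace.single i.rev 1) - v (arcPoint i t)) := by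
  have hcont : Continuous fun p => fderiv ℝ v p (EuclideanSpace.single i 1) :=
    (hv.continuous_fderiv one_ne_zero).clm_apply continuous_const
  have hint := (integrableOn_of_continuous_of_subset_fanDomain hcont
    (A := fanCap i) fun _ hp => hp.1).integrable_indicator (measurableSet_fanCap i)
  have hframe := integral_eq_integral_frame (EuclideanSpace.basisFun (Fin 2) ℝ) i hint
  simp only [EuclideanSpace.basisFun_apply] at hframe
  rw [← integral_indicator (measurableSet_fanCap i), hframe, ← integral_indicator measurableSet_Ioo]
  refine integral_congr_ae (ae_of_all _ fun t => ?_)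
  by_cases ht : t ∈ Ioo 0 2
  · rw [indicator_of_mem ht]
    have hline := integral_Ioo_fderiv_line hv (t • EuclideanSpace.single i.rev 1)
      (EuclideanSpace.single i 1) (arcAbscissa_neg ht).le
    rw [zero_smul, add_zero] at hline
    rw [arcPoint, ← hline, ← integral_indicator measurableSet_Ioo]
    simp only [indicator, smul_single_mem_fanCap_iff, ht, true_and]
  · simp [indicator, smul_single_mem_fanCap_iff, ht]

lemma fanDomain_inter_le_theta (hs : s ∈ Icc 0 (π / 2)) :
    fanDomain ∩ {p | s ≤ theta p} = sector 2 s (π / 2) ∪ fanCap 0 := by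
  ext p
  constructor
  · rintro ⟨hp, hsp : s ≤ theta p⟩
    rcases le_or_gt (theta p) (π / 2) with h | h
    · obtain ⟨h0, h1⟩ := theta_mem_Icc_iff.1 ⟨hs.1.trans hsp, h⟩
      exact .inl ⟨(mem_fanDomain_iff_of_nonneg h0 h1).1 hp, hsp, h⟩
    · exact .inr ⟨hp, (pi_div_two_lt_theta_iff.1 h).1⟩
  · rintro (⟨hnorm, hsp, h⟩ | hp)
    · obtain ⟨h0, h1⟩ := theta_mem_Icc_iff.1 ⟨hs.1.trans hsp, h⟩
      exact ⟨(mem_fanDomain_iff_of_nonneg h0 h1).2 hnorm, hsp⟩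
    · exact ⟨hp.1, hs.2.trans (pi_div_two_lt_theta_of_mem_fanCap hp).le⟩

lemma fanDomain_eq_union_fanCap_one :
    fanDomain = (fanDomain ∩ {p | 0 ≤ theta p}) ∪ fanCap 1 := by
  ext p
  have htheta : 0 ≤ theta p ↔ ¬p 1 < 0 := by rw [← theta_neg_iff, not_lt]
  simp only [mem_union, mem_inter_iff, mem_ofPred_eq, htheta, fanCap]
  grind

lemma radial_zero : radial 0 = EuclideanSpace.single 0 1 := by
  ext i
  fin_cases i <;> simp [radial]

lemma radial_pi_div_two : radial (π / 2) = EuclideanSpace.single 1 1 := by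
  ext i
  fin_cases i <;> simp [radial]

lemma integrableOn_Ioo_comp {γ : ℝ → E2} (hv : Continuous v) (hγ : Continuous γ) :
    IntegrableOn (fun t => v (γ t)) (Ioo 0 2) :=
  ((hv.comp hγ).continuousOn.integrableOn_compact isCompact_Icc).mono_set Ioo_subset_Icc_self

lemma integral_sector_fderiv_fanField (hv : ContDiff ℝ 1 v) (hs : s ∈ Icc 0 (π / 2)) :
    ∫ p in sector 2 s (π / 2), fderiv ℝ v p (fanField p)
      = (∫ r in Ioo (0 : ℝ) 2, v (r • radial (π / 2)))
        - ∫ r in Ioo (0 : ℝ) 2, v (r • radial s) := by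
  rw [setIntegral_congr_fun (measurableSet_sector _ _ _) fun p hp => congrArg (fderiv ℝ v p)
      (fanField_of_theta_mem ⟨hs.1.trans hp.2.1, hp.2.2⟩),
    integral_sector_fderiv_angularField hv (by linarith [hs.1, pi_pos]) hs.2
      (by linarith [pi_pos]),
    integral_sub (integrableOn_Ioo_comp hv.continuous (by fun_prop))
      (integrableOn_Ioo_comp hv.continuous (by fun_prop))]

lemma integral_fanCap_zero_fderiv_fanField (hv : ContDiff ℝ 1 v) :
    ∫ p in fanCap 0, fderiv ℝ v p (fanField p)
      = (∫ t in Ioo 0 2, v (arcPoint 0 t)) - ∫ r in Ioo (0 : ℝ) 2, v (r • radial (π / 2)) := by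
  rw [setIntegral_congr_fun (measurableSet_fanCap 0) fun p hp => congrArg (fderiv ℝ v p)
      (fanField_of_mem_fanCap_zero hp)]
  simp only [map_neg]
  rw [integral_neg, integral_fanCap_fderiv hv, radial_pi_div_two,
    integral_sub (integrableOn_Ioo_comp hv.continuous (by fun_prop))
      (integrableOn_Ioo_comp hv.continuous (continuous_arcPoint 0)), neg_sub]
  rfl

lemma integral_fanCap_one_fderiv_fanField (hv : ContDiff ℝ 1 v) :
    ∫ p in fanCap 1, fderiv ℝ v p (fanField p)
      = (∫ r in Ioo (0 : ℝ) 2, v (r • radial 0)) - ∫ t in Ioo 0 2, v (arcPoint 1 t) := by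
  rw [setIntegral_congr_fun (measurableSet_fanCap 1) fun p hp => congrArg (fderiv ℝ v p)
      (fanField_of_mem_fanCap_one hp), integral_fanCap_fderiv hv, radial_zero,
    integral_sub (integrableOn_Ioo_comp hv.continuous (by fun_prop))
      (integrableOn_Ioo_comp hv.continuous (continuous_arcPoint 1))]
  rfl

theorem integral_fderiv_fanField_le_theta (hv : ContDiff ℝ 1 v) (hs : s ∈ Icc 0 (π / 2)) :
    ∫ p in fanDomain ∩ {p | s ≤ theta p}, fderiv ℝ v p (fanField p)
      = (∫ t in Ioo 0 2, v (arcPoint 0 t)) - ∫ r in Ioo (0 : ℝ) 2, v (r • radial s) := by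
  have hunion := fanDomain_inter_le_theta hs
  have hdisjoint : Disjoint (sector 2 s (π / 2)) (fanCap 0) :=
    disjoint_left.2 fun p hp hcap => hp.2.2.not_gt (pi_div_two_lt_theta_of_mem_fanCap hcap)
  rw [hunion, setIntegral_union hdisjoint (measurableSet_fanCap 0)
      (integrableOn_fderiv_fanField hv fun p hp => (hunion.ge (.inl hp)).1)
      (integrableOn_fderiv_fanField hv fun p hp => hp.1),
    integral_sector_fderiv_fanField hv hs, integral_fanCap_zero_fderiv_fanField hv]
  ring

theorem integral_fderiv_fanField (hv : ContDiff ℝ 1 v) :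
    ∫ p in fanDomain, fderiv ℝ v p (fanField p)
      = (∫ t in Ioo 0 2, v (arcPoint 0 t)) - ∫ t in Ioo 0 2, v (arcPoint 1 t) := by
  have hdisjoint : Disjoint (fanDomain ∩ {p | 0 ≤ theta p}) (fanCap 1) :=
    disjoint_left.2 fun p hp hcap => hp.2.not_gt (theta_neg_iff.2 hcap.2)
  rw [fanDomain_eq_union_fanCap_one, setIntegral_union hdisjoint (measurableSet_fanCap 1)
      (integrableOn_fderiv_fanField hv inter_subset_left)
      (integrableOn_fderiv_fanField hv fun p hp => hp.1),
    integral_fderiv_fanField_le_theta hv ⟨le_rfl, by positivity⟩,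
    integral_fanCap_one_fderiv_fanField hv]
  ring

end Flux

section DivergenceFree

variable {i : Fin 2} {t : ℝ} {v : E2 → ℝ}

lemma inner_gradient_eq_fderiv (z p : E2) : ⟪z, gradient v p⟫ = fderiv ℝ v p z := by
  rw [inner_gradient_right]
  rfl

lemma arcPoint_mem_frontier_fanDomain (ht : t ∈ Ioo 0 2) : arcPoint i t ∈ frontier fanDomain := by
  rw [isOpen_fanDomain.frontier_eq]
  constructor
  · have hclosure : arcAbscissa t ∈ closure (Ioo (arcAbscissa t) 0) := by
      rw [closure_Ioo (arcAbscissa_neg ht).ne]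
      exact left_mem_Icc.2 (arcAbscissa_neg ht).le
    exact map_mem_closure (f := fun s : ℝ =>
      t • EuclideanSpace.single i.rev (1 : ℝ) + s • EuclideanSpace.single i 1) (by fun_prop)
      hclosure fun s hs => (smul_single_mem_fanCap_iff.2 ⟨ht, hs⟩).1
  · intro hmem
    have hcap : arcPoint i t ∈ fanCap i :=
      ⟨hmem, (arcPoint_apply i t).trans_lt (arcAbscissa_neg ht)⟩
    exact lt_irrefl _ (smul_single_mem_fanCap_iff.1 hcap).2.1

lemma integral_arcPoint_eq_zero (hsupp : tsupport v ⊆ fanDomain) :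
    ∫ t in Ioo 0 2, v (arcPoint i t) = 0 :=
  setIntegral_eq_zero_of_forall_eq_zero fun _ ht => image_eq_zero_of_notMem_tsupport fun h =>
    (isOpen_fanDomain.frontier_eq ▸ arcPoint_mem_frontier_fanDomain ht).2 (hsupp h)

theorem divFreeOn_fanField : DivFreeOn fanDomain fanField := by
  intro ϕ hϕ _ hsupp
  simp only [inner_gradient_eq_fderiv]
  rw [integral_fderiv_fanField (contDiff_infty.1 hϕ 1), integral_arcPoint_eq_zero hsupp,
    integral_arcPoint_eq_zero hsupp, sub_zero]

end DivergenceFree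

section LevelMeasure

lemma exists_measureReal_Iic_eq {f : ℝ → ℝ} (hf : Monotone f) {a b : ℝ} (ha : ∀ x < a, f x = 0)
    (hb : ∀ x > b, f x = 1) :
    ∃ ν : Measure ℝ, IsProbabilityMeasure ν ∧ ν (Icc a b)ᶜ = 0 ∧
      ∀ x, ContinuousAt f x → ν.real (Iic x) = f x := by
  have hbot : Tendsto hf.stieltjesFunction atBot (𝓝 0) := tendsto_rightLim_atBot_of_tendsto
    (tendsto_const_nhds.congr' ((eventually_lt_atBot a).mono fun x hx => (ha x hx).symm))
  have htop : Tendsto hf.stieltjesFunction atTop (𝓝 1) := tendsto_rightLim_atTop_of_tendsto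
    (tendsto_const_nhds.congr' ((eventually_gt_atTop b).mono fun x hx => (hb x hx).symm))
  have hprob := hf.stieltjesFunction.isProbabilityMeasure hbot htop
  have hright : hf.stieltjesFunction b = 1 := rightLim_eq_of_tendsto
    (tendsto_const_nhds.congr' (eventually_nhdsWithin_of_forall fun x hx => (hb x hx).symm))
  have hleft : Function.leftLim hf.stieltjesFunction a = 0 := (leftLim_rightLim
    (hf.tendsto_leftLim a)).trans (leftLim_eq_of_tendsto (tendsto_const_nhds.congr'
      (eventually_nhdsWithin_of_forall fun x hx => (ha x hx).symm)))
  refine ⟨hf.stieltjesFunction.measure, hprob, ?_, fun x hx => ?_⟩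
  · rw [prob_compl_eq_zero_iff measurableSet_Icc, StieltjesFunction.measure_Icc, hright, hleft,
      sub_zero, ENNReal.ofReal_one]
  · have hcont : hf.stieltjesFunction x = f x := hx.continuousWithinAt.rightLim_eq
    have hnonneg : 0 ≤ hf.stieltjesFunction x :=
      le_of_tendsto hbot ((eventually_le_atBot x).mono fun y hy => hf.stieltjesFunction.mono hy)
    rw [measureReal_def, StieltjesFunction.measure_Iic _ hbot, sub_zero,
      ENNReal.toReal_ofReal hnonneg, hcont]

lemma volume_setOf_theta_eq (s : ℝ) : volume {p : E2 | theta p = s} = 0 := by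
  have hne : (Submodule.span ℝ {radial s} : Submodule ℝ E2) ≠ ⊤ := fun htop => by
    have hrank := finrank_span_singleton (K := ℝ) (norm_ne_zero_iff.1 (norm_radial s ▸ one_ne_zero))
    rw [htop, finrank_top, finrank_euclideanSpace_fin] at hrank
    norm_num at hrank
  refine measure_mono_null ?_ (Measure.addHaar_submodule volume _ hne)
  rintro p rfl
  exact Submodule.mem_span_singleton.2 ⟨‖p‖, norm_smul_radial_theta p⟩

lemma ae_continuousAt_theta {f : ℝ → ℝ} (hf : Monotone f) :
    ∀ᵐ p : E2, ContinuousAt f (theta p) := by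
  have hunion : {p : E2 | ¬ContinuousAt f (theta p)}
      = ⋃ s ∈ {s | ¬ContinuousAt f s}, {p : E2 | theta p = s} := by
    ext p
    simp
  rw [ae_iff, hunion, measure_biUnion_null_iff hf.countable_not_continuousAt]
  exact fun s _ => volume_setOf_theta_eq s

/-- The function `u` of the example, for the level function `g`. -/
noncomputable def fanFunction (g : ℝ → ℝ) (p : E2) : ℝ :=
  if theta p < 0 then 0 else if theta p ≤ π/2 then g (theta p) else 1

variable {g : ℝ → ℝ}

lemma exists_measure_fanFunction_ae_eq (hg : MonotoneOn g (Icc 0 (π / 2)))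
    (hg01 : ∀ y ∈ Icc 0 (π / 2), g y ∈ Icc 0 1) :
    ∃ ν : Measure ℝ, IsProbabilityMeasure ν ∧ ν (Icc 0 (π / 2))ᶜ = 0 ∧
      fanFunction g =ᵐ[volume] fun p => ν.real (Iic (theta p)) := by
  let f : ℝ → ℝ := fun t => if t < 0 then 0 else if t ≤ π / 2 then g t else 1
  have hf : Monotone f := by
    intro s t hst
    simp only [f]
    have hs (h0 : ¬s < 0) (h1 : s ≤ π / 2) := hg01 s ⟨not_lt.1 h0, h1⟩
    have ht (h0 : ¬t < 0) (h1 : t ≤ π / 2) := hg01 t ⟨not_lt.1 h0, h1⟩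
    have hgst (h0 : ¬s < 0) (h1 : t ≤ π / 2) : g s ≤ g t :=
      hg ⟨not_lt.1 h0, hst.trans h1⟩ ⟨(not_lt.1 h0).trans hst, h1⟩ hst
    split_ifs <;> grind
  have hzero (t : ℝ) (ht : t < 0) : f t = 0 := if_pos ht
  have hone (t : ℝ) (ht : π / 2 < t) : f t = 1 := by
    simp only [f, if_neg (pi_div_two_pos.trans ht).not_gt, if_neg ht.not_ge]
  obtain ⟨ν, hν, hsupp, hIic⟩ := exists_measureReal_Iic_eq hf hzero hone
  exact ⟨ν, hν, hsupp, (ae_continuousAt_theta hf).mono fun p hp => (hIic _ hp).symm⟩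

lemma setIntegral_measureReal_Iic_theta_mul {ν : Measure ℝ} [IsFiniteMeasure ν] {A : Set E2}
    {h : E2 → ℝ} (hh : IntegrableOn h A) :
    ∫ p in A, ν.real (Iic (theta p)) * h p
      = ∫ s, ∫ p in A ∩ {p : E2 | s ≤ theta p}, h p ∂volume ∂ν := by
  rw [integral_measureReal_Iic_mul measurable_theta hh]
  simp only [Measure.restrict_restrict (measurableSet_le measurable_const measurable_theta),
    inter_comm A]

end LevelMeasure

section FanMeasure

/-- Length on the rays `θ = s` of the quarter-disk of radius `2`, weighted by `ν` in `s`. This is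
the measure `|Du|` of the example when `ν` is the distributional derivative of `g`. -/
noncomputable def fanMeasure (ν : Measure ℝ) : Measure E2 :=
  (ν.prod (volume.restrict (Ioo (0 : ℝ) 2))).map fun q => q.2 • radial q.1

variable {ν : Measure ℝ} {v : E2 → ℝ} {s : ℝ}

lemma measurable_smul_radial : Measurable fun q : ℝ × ℝ => q.2 • radial q.1 :=
  (continuous_snd.smul (continuous_radial.comp continuous_fst)).measurable

instance [IsFiniteMeasure ν] : IsFiniteMeasure (fanMeasure ν) :=
  inferInstanceAs (IsFiniteMeasure (Measure.map _ _))

lemma fanMeasure_fanDomain_ne_zero [SFinite ν] [NeZero ν] (hν : ν (Icc 0 (π / 2))ᶜ = 0) :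
    fanMeasure ν fanDomain ≠ 0 := by
  have hIcc : ν (Icc 0 (π / 2)) ≠ 0 := fun h => NeZero.ne ν <| by
    rw [← Measure.measure_univ_eq_zero, ← union_compl_self (Icc 0 (π / 2))]
    exact measure_union_null h hν
  have hsub : Icc 0 (π / 2) ×ˢ Ioo 0 2
      ⊆ (fun q : ℝ × ℝ => q.2 • radial q.1) ⁻¹' fanDomain :=
    fun q hq => (smul_radial_mem_fanDomain_iff hq.1).2 hq.2
  rw [fanMeasure, Measure.map_apply measurable_smul_radial isOpen_fanDomain.measurableSet]
  refine fun hzero => hIcc ?_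
  simpa using measure_mono_null hsub hzero

lemma integral_fanMeasure [SFinite ν] {F : E2 → ℝ} (hF : Integrable F (fanMeasure ν)) :
    ∫ p, F p ∂fanMeasure ν = ∫ s, (∫ r in Ioo (0 : ℝ) 2, F (r • radial s)) ∂ν := by
  have hmeas := measurable_smul_radial.aemeasurable (μ := ν.prod (volume.restrict (Ioo 0 2)))
  rw [fanMeasure, integral_map hmeas hF.1]
  exact integral_prod _ ((integrable_map_measure hF.1 hmeas).1 hF)

theorem setIntegral_measureReal_mul_fderiv_fanField [IsFiniteMeasure ν]
    (hν : ν (Icc 0 (π / 2))ᶜ = 0) (hv : ContDiff ℝ 1 v) (hc : HasCompactSupport v)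
    (hsupp : tsupport v ⊆ fanDomain) :
    ∫ p in fanDomain, ν.real (Iic (theta p)) * fderiv ℝ v p (fanField p)
      = -∫ p, v p ∂fanMeasure ν := by
  rw [setIntegral_measureReal_Iic_theta_mul (integrableOn_fderiv_fanField hv Subset.rfl),
    integral_fanMeasure (hv.continuous.integrable_of_hasCompactSupport hc), ← integral_neg]
  refine integral_congr_ae ?_
  filter_upwards [mem_ae_iff.2 hν] with s hs
  rw [integral_fderiv_fanField_le_theta hv hs, integral_arcPoint_eq_zero hsupp, zero_sub]

variable {w : E2 → E2}

lemma div2_eq_zero_of_notMem_tsupport {p : E2} (hp : p ∉ tsupport w) : div2 w p = 0 := by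
  simp [div2, image_eq_zero_of_notMem_tsupport fun h => hp (tsupport_fderiv_subset ℝ h)]

lemma integrable_div2 (hw : ContDiff ℝ 1 w) (hc : HasCompactSupport w) : Integrable (div2 w) := by
  have := hw.continuous_fderiv one_ne_zero
  have hdiv : Continuous (div2 w) := by
    unfold div2
    fun_prop
  exact hdiv.integrable_of_hasCompactSupport
    (.intro hc fun _ => div2_eq_zero_of_notMem_tsupport)

lemma le_theta_iff_of_mem_fanDomain {p : E2} (hp : p ∈ fanDomain) (hs : s ∈ Icc 0 (π / 2)) :
    s ≤ theta p ↔ 0 ≤ ⟪rot (radial s), p⟫ := by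
  obtain ⟨hlower, hupper⟩ := theta_mem_Ioo_of_mem_fanDomain hp
  rw [inner_rot_radial, mul_nonneg_iff_of_pos_left (norm_pos_iff.2 (ne_zero_of_mem_fanDomain hp))]
  constructor
  · intro h
    exact sin_nonneg_of_nonneg_of_le_pi (sub_nonneg.2 h) (by linarith [hs.1])
  · contrapose!
    intro h
    exact sin_neg_of_neg_of_neg_pi_lt (sub_neg.2 h) (by linarith [hs.2])

lemma integral_div2_le_theta (hw : ContDiff ℝ 1 w) (hc : HasCompactSupport w)
    (hsupp : tsupport w ⊆ fanDomain) (hs : s ∈ Icc 0 (π / 2)) :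
    ∫ p in fanDomain ∩ {p | s ≤ theta p}, div2 w p
      = -∫ r in Ioo (0 : ℝ) 2, ⟪w (r • radial s), angularField (r • radial s)⟫ := by
  obtain ⟨b, hb0, hb1⟩ := exists_orthonormalBasis_rot (norm_radial s)
  have hset : fanDomain ∩ {p | s ≤ theta p} = fanDomain ∩ {p | 0 ≤ ⟪b 1, p⟫} := by
    ext p
    exact and_congr_right fun hp => hb1 ▸ le_theta_iff_of_mem_fanDomain hp hs
  have hzero : ∀ r ∈ univ \ Ioo (0 : ℝ) 2, ⟪b 1, w (r • radial s)⟫ = 0 := fun r hr => by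
    rw [image_eq_zero_of_notMem_tsupport fun h =>
      hr.2 ((smul_radial_mem_fanDomain_iff hs).1 (hsupp h)), inner_zero_right]
  have hdiv : ∀ p ∈ {p | 0 ≤ ⟪b 1, p⟫} \ (fanDomain ∩ {p | 0 ≤ ⟪b 1, p⟫}), div2 w p = 0 :=
    fun p hp => div2_eq_zero_of_notMem_tsupport fun h => hp.2 ⟨hsupp h, hp.1⟩
  rw [hset, ← setIntegral_eq_of_subset_of_forall_sdiff_eq_zero (measurableSet_halfPlane (b 1))
      inter_subset_right hdiv,
    integral_halfPlane_div2 b 1 hw hc, show Fin.rev 1 = (0 : Fin 2) from rfl, hb0,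
    ← setIntegral_univ,
    setIntegral_eq_of_subset_of_forall_sdiff_eq_zero .univ (subset_univ _) hzero]
  refine congrArg _ (setIntegral_congr_fun measurableSet_Ioo fun r hr => ?_)
  rw [angularField_smul_radial hr.1, hb1, real_inner_comm]

theorem setIntegral_measureReal_mul_div2 [IsFiniteMeasure ν] (hν : ν (Icc 0 (π / 2))ᶜ = 0)
    (hw : ContDiff ℝ 1 w) (hc : HasCompactSupport w) (hsupp : tsupport w ⊆ fanDomain) :
    ∫ p in fanDomain, ν.real (Iic (theta p)) * div2 w p
      = -∫ p, ⟪w p, angularField p⟫ ∂fanMeasure ν := by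
  rw [setIntegral_measureReal_Iic_theta_mul (integrable_div2 hw hc).integrableOn,
    integral_fanMeasure (integrable_inner_of_hasCompactSupport hw.continuous hc
      measurable_angularField norm_angularField_le_one), ← integral_neg]
  refine integral_congr_ae ?_
  filter_upwards [mem_ae_iff.2 hν] with s hs
  exact integral_div2_le_theta hw hc hsupp hs

end FanMeasure

section Pairing

variable {ν : Measure ℝ} {π₀ T : Measure E2} {u : E2 → ℝ} {g : ℝ → ℝ} {A : Set E2}

lemma iSup_ofReal_integral_mul_div2_eq_fanMeasure [IsFiniteMeasure ν]
    (hν : ν (Icc 0 (π / 2))ᶜ = 0) (hu : u =ᵐ[volume] fun p => ν.real (Iic (theta p)))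
    (hA : IsOpen A) (hAΩ : A ⊆ fanDomain) :
    ⨆ w : {w : E2 → E2 // ContDiff ℝ 1 w ∧ HasCompactSupport w ∧ tsupport w ⊆ A ∧ ∀ x, ‖w x‖ ≤ 1},
      ENNReal.ofReal (∫ p in A, u p * div2 w.1 p) = fanMeasure ν A := by
  have hne : A ⊆ {0}ᶜ := fun p hp => ne_zero_of_mem_fanDomain (hAΩ hp)
  rw [← iSup_ofReal_integral_inner_eq_measure hA measurable_angularField.neg
    (fun p => by simpa using norm_angularField_le_one p) (contDiffOn_angularField.mono hne).neg
    fun p hp => by simpa using norm_angularField (hne hp)]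
  refine iSup_congr fun ⟨w, hw, hc, hsupp, _⟩ => congrArg ENNReal.ofReal ?_
  have hzero : ∀ p ∈ fanDomain \ A, u p * div2 w p = 0 := fun p hp => by
    rw [div2_eq_zero_of_notMem_tsupport fun h => hp.2 (hsupp h), mul_zero]
  calc ∫ p in A, u p * div2 w p
      = ∫ p in fanDomain, u p * div2 w p :=
        (setIntegral_eq_of_subset_of_forall_sdiff_eq_zero isOpen_fanDomain.measurableSet
          hAΩ hzero).symm
    _ = ∫ p in fanDomain, ν.real (Iic (theta p)) * div2 w p :=
        integral_congr_ae ((ae_restrict_of_ae hu).mono fun p hp => by simp only [hp])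
    _ = ∫ p, ⟪w p, -angularField p⟫ ∂fanMeasure ν := by
        simp only [inner_neg_right, integral_neg,
          setIntegral_measureReal_mul_div2 hν hw hc (hsupp.trans hAΩ)]

lemma measure_eq_fanMeasure_of_forall_integral_eq [IsFiniteMeasure ν] [NeZero ν]
    (hν : ν (Icc 0 (π / 2))ᶜ = 0) (hu : u =ᵐ[volume] fun p => ν.real (Iic (theta p)))
    (hπ₀ : ∀ ϕ : E2 → ℝ, ContDiff ℝ (⊤ : ℕ∞) ϕ → HasCompactSupport ϕ → tsupport ϕ ⊆ fanDomain →
      ∫ p, ϕ p ∂π₀ = -∫ p in fanDomain, u p * ⟪fanField p, gradient ϕ p⟫)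
    (hA : IsOpen A) (hAΩ : A ⊆ fanDomain) : π₀ A = fanMeasure ν A := by
  refine measure_eq_of_forall_integral_contDiff_eq isOpen_fanDomain
    (fanMeasure_fanDomain_ne_zero hν) (fun ϕ hϕ hc hsupp => ?_) hA hAΩ
  calc ∫ p, ϕ p ∂π₀
      = -∫ p in fanDomain, ν.real (Iic (theta p)) * fderiv ℝ ϕ p (fanField p) := by
        rw [hπ₀ ϕ hϕ hc hsupp]
        refine congrArg _ (integral_congr_ae ((ae_restrict_of_ae hu).mono fun p hp => ?_))
        simp only [hp, inner_gradient_eq_fderiv]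
    _ = ∫ p, ϕ p ∂fanMeasure ν := by
        rw [setIntegral_measureReal_mul_fderiv_fanField hν (contDiff_infty.1 hϕ 1) hc hsupp,
          neg_neg]

theorem pairing_eq_totalVariation (hg : MonotoneOn g (Icc 0 (π / 2)))
    (hg01 : ∀ y ∈ Icc 0 (π / 2), g y ∈ Icc 0 1)
    (hT : ∀ A : Set E2, IsOpen A → A ⊆ fanDomain →
      T A = ⨆ w : {w : E2 → E2 // ContDiff ℝ 1 w ∧ HasCompactSupport w ∧
          tsupport w ⊆ A ∧ ∀ x, ‖w x‖ ≤ 1},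
        ENNReal.ofReal (∫ p in A, fanFunction g p * div2 w.1 p))
    (hπ₀ : ∀ ϕ : E2 → ℝ, ContDiff ℝ (⊤ : ℕ∞) ϕ → HasCompactSupport ϕ → tsupport ϕ ⊆ fanDomain →
      ∫ p, ϕ p ∂π₀ = -∫ p in fanDomain, fanFunction g p * ⟪fanField p, gradient ϕ p⟫)
    (hAΩ : A ⊆ fanDomain) : π₀ A = T A := by
  obtain ⟨ν, _, hν, hu⟩ := exists_measure_fanFunction_ae_eq hg hg01
  have hrestrict : π₀.restrict fanDomain = T.restrict fanDomain :=
    (restrict_eq_of_forall_isOpen (ν := fanMeasure ν) isOpen_fanDomain fun B hB hBΩ =>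
      measure_eq_fanMeasure_of_forall_integral_eq hν hu hπ₀ hB hBΩ).trans
    (restrict_eq_of_forall_isOpen isOpen_fanDomain fun B hB hBΩ => by
      rw [hT B hB hBΩ, iSup_ofReal_integral_mul_div2_eq_fanMeasure hν hu hB hBΩ]).symm
  rw [← Measure.restrict_eq_self π₀ hAΩ, hrestrict, Measure.restrict_eq_self T hAΩ]

end Pairing

section BoundaryTraces

variable {X E : Type*}

lemma map_restrict_le_hausdorffMeasure_restrict [EMetricSpace X] [MeasurableSpace X]
    [BorelSpace X] {γ : ℝ → X} {ρ : X → ℝ} {I : Set ℝ} {S : Set X} (hγ : Measurable γ)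
    (hρ : LipschitzWith 1 ρ) (hleft : LeftInvOn ρ γ I) (hmaps : MapsTo γ I S) :
    (volume.restrict I).map γ ≤ μH[1].restrict S := by
  refine Measure.le_iff.2 fun A hA => ?_
  have hsub : γ ⁻¹' A ∩ I ⊆ ρ '' (A ∩ S) :=
    fun t ht => ⟨γ t, ⟨ht.1, hmaps ht.2⟩, hleft ht.2⟩
  rw [Measure.map_apply hγ hA, Measure.restrict_apply (hγ hA), Measure.restrict_apply hA,
    ← hausdorffMeasure_real]
  simpa using (measure_mono hsub).trans (hρ.hausdorffMeasure_image_le zero_le_one (A ∩ S))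

lemma integrable_of_integral_mul_ne_zero [MeasurableSpace X] {μ : Measure X} {f v : X → ℝ}
    (hv : AEMeasurable v μ) (hv1 : ∀ x, 1 ≤ v x) (h : ∫ x, f x * v x ∂μ ≠ 0) :
    Integrable f μ := by
  refine ((Integrable.of_integral_ne_zero h).mul_bdd hv.inv.aestronglyMeasurable (c := 1)
    (ae_of_all μ fun x => ?_)).congr (ae_of_all μ fun x => ?_)
  · simpa [abs_of_pos (zero_lt_one.trans_le (hv1 x))] using inv_le_one_of_one_le₀ (hv1 x)
  · simp [mul_inv_cancel_right₀ (zero_lt_one.trans_le (hv1 x)).ne']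

lemma ae_eq_rnDeriv_sub_rnDeriv [NormedAddCommGroup E] [NormedSpace ℝ E] [FiniteDimensional ℝ E]
    [MeasurableSpace E] [BorelSpace E] {σ μ ν : Measure E} [SigmaFinite σ] [IsFiniteMeasure μ]
    [IsFiniteMeasure ν] (hμ : μ ≪ σ) (hν : ν ≪ σ) {f : E → ℝ} (hf : Integrable f σ)
    (h : ∀ v : E → ℝ, ContDiff ℝ (⊤ : ℕ∞) v → HasCompactSupport v →
      ∫ x, f x * v x ∂σ = ∫ x, v x ∂μ - ∫ x, v x ∂ν) :
    f =ᵐ[σ] fun x => (μ.rnDeriv σ x).toReal - (ν.rnDeriv σ x).toReal := by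
  have hμσ : Integrable (fun x => (μ.rnDeriv σ x).toReal) σ := Measure.integrable_toReal_rnDeriv
  have hνσ : Integrable (fun x => (ν.rnDeriv σ x).toReal) σ := Measure.integrable_toReal_rnDeriv
  have hdiff := hf.sub (hμσ.sub hνσ)
  refine (ae_eq_zero_of_integral_contDiff_smul_eq_zero hdiff.locallyIntegrable ?_).mono
    fun x hx => sub_eq_zero.1 hx
  intro v hv hc
  obtain ⟨C, hC⟩ := hc.exists_bound_of_continuous hv.continuous
  have hbdd {k : E → ℝ} (hk : Integrable k σ) : Integrable (fun x => v x * k x) σ :=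
    hk.bdd_mul hv.continuous.aestronglyMeasurable (ae_of_all σ hC)
  have hvf : ∫ x, v x * f x ∂σ = ∫ x, v x ∂μ - ∫ x, v x ∂ν := by
    simpa only [mul_comm] using h v hv hc
  have hvμ := integral_rnDeriv_smul (f := v) hμ
  have hvν := integral_rnDeriv_smul (f := v) hν
  simp only [smul_eq_mul, mul_comm _ (v _)] at hvμ hvν
  simp only [Pi.sub_apply, smul_eq_mul, mul_sub]
  rw [integral_sub (hbdd hf), integral_sub (hbdd hμσ) (hbdd hνσ), hvf, hvμ, hvν, sub_self]
  exact (hbdd hμσ).sub (hbdd hνσ)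

lemma eq_of_tendsto_average_abs_sub [PseudoMetricSpace X] [MeasurableSpace X] [BorelSpace X]
    {μ : Measure X} [μ.IsOpenPosMeasure] [IsLocallyFiniteMeasure μ] {U : Set X} (hU : IsOpen U)
    {p : X} (hp : p ∈ closure U) {w : X → ℝ} {k T : ℝ} (hw : ∀ᶠ y in 𝓝 p, y ∈ U → w y = k)
    (hT : Tendsto (fun r => (∫ y in Metric.ball p r ∩ U, |w y - T| ∂μ) /
      (μ (Metric.ball p r ∩ U)).toReal) (𝓝[>] 0) (𝓝 0)) : T = k := by
  obtain ⟨ε, hε, hball⟩ := Metric.eventually_nhds_iff_ball.1 hw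
  obtain ⟨V, hpV, hV, hVfin⟩ := μ.exists_isOpen_measure_lt_top p
  obtain ⟨δ, hδ, hballV⟩ := Metric.isOpen_iff.1 hV p hpV
  suffices heq : ∀ᶠ r in 𝓝[>] 0, |k - T| = (∫ y in Metric.ball p r ∩ U, |w y - T| ∂μ) /
      (μ (Metric.ball p r ∩ U)).toReal from
    (sub_eq_zero.1 (abs_eq_zero.1 (tendsto_nhds_unique (tendsto_const_nhds.congr' heq) hT))).symm
  filter_upwards [Ioo_mem_nhdsGT (lt_min hε hδ)] with r ⟨hr, hrlt⟩
  have hopen : IsOpen (Metric.ball p r ∩ U) := Metric.isOpen_ball.inter hU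
  have hne : (Metric.ball p r ∩ U).Nonempty :=
    mem_closure_iff.1 hp _ Metric.isOpen_ball (Metric.mem_ball_self hr)
  have hfin : μ (Metric.ball p r ∩ U) ≠ ⊤ := (measure_mono <| inter_subset_left.trans <|
    (Metric.ball_subset_ball (hrlt.le.trans (min_le_right ε δ))).trans hballV).trans_lt hVfin |>.ne
  have hpos : (μ (Metric.ball p r ∩ U)).toReal ≠ 0 :=
    (ENNReal.toReal_pos (hopen.measure_pos μ hne).ne' hfin).ne'
  have hconst : ∀ y ∈ Metric.ball p r ∩ U, |w y - T| = |k - T| := fun y hy => by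
    rw [hball y (Metric.ball_subset_ball (hrlt.le.trans (min_le_left ε δ)) hy.1) hy.2]
  rw [setIntegral_congr_fun hopen.measurableSet hconst, setIntegral_const, smul_eq_mul,
    measureReal_def, mul_div_cancel_left₀ _ hpos]

end BoundaryTraces

section Boundary

/-- The boundary length `σ` of the domain `Ω`. -/
noncomputable def fanBoundaryMeasure : Measure E2 := μH[1].restrict (frontier fanDomain)

/-- Length on the axis `(0, 2)`, transported to the circular arc that bounds `fanCap i`. The flux
of `z` through that arc is `±1` per unit of this length. -/
noncomputable def arcMeasure (i : Fin 2) : Measure E2 :=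
  (volume.restrict (Ioo 0 2)).map (arcPoint i)

variable {i : Fin 2} {p : E2} {v : E2 → ℝ}

lemma hausdorffMeasure_sphere_lt_top (c : E2) (R : ℝ) : μH[1] (Metric.sphere c R) < ⊤ := by
  have hderiv (t : ℝ) : HasDerivAt (fun t => c + R • radial t) (R • rot (radial t)) t :=
    ((hasDerivAt_radial t).const_smul R).const_add c
  have hlip : LipschitzWith ‖R‖₊ fun t => c + R • radial t :=
    lipschitzWith_of_nnnorm_deriv_le (fun t => (hderiv t).differentiableAt) fun t => by
      rw [(hderiv t).deriv, ← NNReal.coe_le_coe]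
      simp [norm_smul, norm_rot, norm_radial]
  have hsub : Metric.sphere c R ⊆ (fun t => c + R • radial t) '' Icc (-π) π := by
    intro p hp
    refine ⟨theta (p - c), ⟨(Complex.neg_pi_lt_arg _).le, Complex.arg_le_pi _⟩, ?_⟩
    simp only [← mem_sphere_iff_norm.1 hp, norm_smul_radial_theta, add_sub_cancel]
  refine ((measure_mono hsub).trans
    (hlip.hausdorffMeasure_image_le zero_le_one (Icc (-π) π))).trans_lt ?_
  rw [hausdorffMeasure_real]
  simp [ENNReal.mul_lt_top_iff]

lemma norm_le_two_of_mem_closure_fanDomain (hp : p ∈ closure fanDomain) : ‖p‖ ≤ 2 :=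
  closure_minimal (fun _ hq => (norm_lt_two_of_mem_fanDomain hq).le)
    (isClosed_le continuous_norm continuous_const) hp

lemma sq_add_sq_le_five_of_mem_closure_fanDomain (hp : p ∈ closure fanDomain) (h : p i < 0) :
    (p i - 2) ^ 2 + (p i.rev - 1) ^ 2 ≤ 5 := by
  have hneg : IsOpen {q : E2 | q i < 0} := isOpen_lt (by fun_prop) continuous_const
  refine closure_minimal (t := {q : E2 | (q i - 2) ^ 2 + (q i.rev - 1) ^ 2 ≤ 5})
    (fun q hq => ?_) (isClosed_le (by fun_prop) continuous_const) (hneg.closure_inter ⟨hp, h⟩)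
  exact ((mem_fanDomain_iff_of_nonpos (le_of_lt hq.2)).1 hq.1).le

lemma rev_pos_of_mem_closure_fanDomain (hp : p ∈ closure fanDomain) (h : p i < 0) :
    0 < p i.rev := by
  nlinarith [sq_add_sq_le_five_of_mem_closure_fanDomain hp h]

lemma mul_neg_of_mem_closure_fanDomain (hp : p ∈ closure fanDomain) (h : p i < 0) :
    p 0 * p 1 < 0 := by
  have hmul := mul_neg_of_neg_of_pos h (rev_pos_of_mem_closure_fanDomain hp h)
  fin_cases i
  · exact hmul
  · exact mul_comm (p 1) (p 0) ▸ hmul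

lemma dist_eq_sqrt_five_iff : dist p (EuclideanSpace.single i 2 + EuclideanSpace.single i.rev 1)
    = √5 ↔ (p i - 2) ^ 2 + (p i.rev - 1) ^ 2 = 5 := by
  rw [EuclideanSpace.dist_eq, Real.sqrt_inj (by positivity) (by norm_num)]
  fin_cases i <;> simp [Fin.sum_univ_two, Real.dist_eq, add_comm]

lemma frontier_fanDomain_subset : frontier fanDomain ⊆ Metric.sphere 0 2 ∪
    ⋃ i : Fin 2, Metric.sphere
      (EuclideanSpace.single i 2 + EuclideanSpace.single i.rev 1 : E2) √5 := by
  rw [isOpen_fanDomain.frontier_eq]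
  rintro p ⟨hp, hpΩ⟩
  by_cases! hneg : ∃ i, p i < 0
  · obtain ⟨i, h⟩ := hneg
    refine .inr (mem_iUnion.2 ⟨i, dist_eq_sqrt_five_iff.2 ?_⟩)
    exact (sq_add_sq_le_five_of_mem_closure_fanDomain hp h).antisymm
      (not_lt.1 fun hlt => hpΩ ((mem_fanDomain_iff_of_nonpos h.le).2 hlt))
  · rw [mem_fanDomain_iff_of_nonneg (hneg 0) (hneg 1)] at hpΩ
    rcases eq_or_ne p 0 with rfl | hne
    · exact .inr (mem_iUnion.2 ⟨0, dist_eq_sqrt_five_iff.2 (by norm_num)⟩)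
    · exact .inl (mem_sphere_zero_iff_norm.2 ((norm_le_two_of_mem_closure_fanDomain hp).antisymm
        (not_lt.1 fun hlt => hpΩ ⟨norm_pos_iff.2 hne, hlt⟩)))

instance : IsFiniteMeasure fanBoundaryMeasure := by
  refine ⟨?_⟩
  rw [fanBoundaryMeasure, Measure.restrict_apply_univ]
  refine (measure_mono frontier_fanDomain_subset).trans_lt
    (measure_union_lt_top (hausdorffMeasure_sphere_lt_top 0 2) ?_)
  exact (measure_iUnion_fintype_le _ _).trans_lt
    (ENNReal.sum_lt_top.2 fun i _ => hausdorffMeasure_sphere_lt_top _ _)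

lemma ae_ne_fanBoundaryMeasure (p : E2) : ∀ᵐ q ∂fanBoundaryMeasure, q ≠ p := by
  have := Measure.nullSingletonClass_hausdorff E2 (d := 1) zero_lt_one
  exact ae_restrict_of_ae (Measure.ae_ne μH[1] p)

lemma arcMeasure_le_fanBoundaryMeasure (i : Fin 2) : arcMeasure i ≤ fanBoundaryMeasure :=
  map_restrict_le_hausdorffMeasure_restrict (continuous_arcPoint i).measurable
    (ρ := fun p => p i.rev) (LipschitzWith.of_dist_le_mul fun p q => by
      simpa [dist_eq_norm] using PiLp.norm_apply_le (p - q) i.rev)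
    (fun t _ => arcPoint_apply_rev i t) fun _ ht => arcPoint_mem_frontier_fanDomain ht

instance : IsFiniteMeasure (arcMeasure i) :=
  isFiniteMeasure_of_le fanBoundaryMeasure (arcMeasure_le_fanBoundaryMeasure i)

lemma arcMeasure_setOf_nonneg (i : Fin 2) : arcMeasure i {p | 0 ≤ p i} = 0 := by
  have hclosed : MeasurableSet {p : E2 | 0 ≤ p i} :=
    (isClosed_le continuous_const (by fun_prop)).measurableSet
  have hempty : arcPoint i ⁻¹' {p | 0 ≤ p i} ∩ Ioo 0 2 = ∅ := by
    refine eq_empty_of_forall_notMem fun t ⟨hnonneg, ht⟩ => (arcAbscissa_neg ht).not_ge ?_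
    exact arcPoint_apply i t ▸ hnonneg
  rw [arcMeasure, Measure.map_apply (continuous_arcPoint i).measurable hclosed,
    Measure.restrict_apply ((continuous_arcPoint i).measurable hclosed), hempty, measure_empty]

lemma integral_arcMeasure (hv : Continuous v) (i : Fin 2) :
    ∫ p, v p ∂arcMeasure i = ∫ t in Ioo 0 2, v (arcPoint i t) :=
  integral_map (continuous_arcPoint i).aemeasurable hv.aestronglyMeasurable

theorem setIntegral_inner_fanField_gradient (hv : ContDiff ℝ 1 v) :
    ∫ p in fanDomain, ⟪fanField p, gradient v p⟫
      = ∫ p, v p ∂arcMeasure 0 - ∫ p, v p ∂arcMeasure 1 := by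
  simp only [inner_gradient_eq_fderiv]
  rw [integral_fderiv_fanField hv, integral_arcMeasure hv.continuous,
    integral_arcMeasure hv.continuous]

end Boundary

section NormalTrace

/-- Anzellotti's Green formula, which characterizes the normal trace `[z, ν]` of the field `z` of
the example; it has no interior term since `div z = 0`. -/
def IsNormalTrace (ntz : E2 → ℝ) : Prop :=
  ∀ v : E2 → ℝ, ContDiff ℝ 1 v →
    ∫ p in fanDomain, ⟪fanField p, gradient v p⟫ = ∫ p, ntz p * v p ∂fanBoundaryMeasure

variable {ntz : E2 → ℝ}

lemma integrable_normalTrace (hntz : IsNormalTrace ntz) :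
    Integrable ntz fanBoundaryMeasure := by
  have hv : ContDiff ℝ 1 fun p : E2 => 1 + exp (p 1) := by fun_prop
  have hint (i : Fin 2) : IntegrableOn (fun t => 1 + exp (arcPoint i t 1)) (Ioo 0 2) :=
    integrableOn_Ioo_comp hv.continuous (continuous_arcPoint i)
  have hdiff : ∀ t ∈ Ioo (0 : ℝ) 2,
      0 < 1 + exp (arcPoint 0 t 1) - (1 + exp (arcPoint 1 t 1)) := fun t ht => by
    have h0 : arcPoint 0 t 1 = t := arcPoint_apply_rev 0 t
    rw [h0, arcPoint_apply, add_sub_add_left_eq_sub, sub_pos, exp_lt_exp]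
    exact (arcAbscissa_neg ht).trans ht.1
  refine integrable_of_integral_mul_ne_zero (v := fun p : E2 => 1 + exp (p 1))
    hv.continuous.aemeasurable (fun p => by linarith [exp_pos (p 1)]) ?_
  rw [← hntz _ hv, setIntegral_inner_fanField_gradient hv, integral_arcMeasure hv.continuous,
    integral_arcMeasure hv.continuous, ← integral_sub (hint 0) (hint 1)]
  refine ((setIntegral_pos_iff_support_of_nonneg_ae ?_ ((hint 0).sub (hint 1))).2 ?_).ne'
  · exact (ae_restrict_mem measurableSet_Ioo).mono fun t ht => (hdiff t ht).le
  · exact lt_of_lt_of_le (by simp) (measure_mono fun t ht => ⟨(hdiff t ht).ne', ht⟩)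

theorem normalTrace_ae_eq (hntz : IsNormalTrace ntz) :
    ntz =ᵐ[fanBoundaryMeasure] fun p =>
      ((arcMeasure 0).rnDeriv fanBoundaryMeasure p).toReal
        - ((arcMeasure 1).rnDeriv fanBoundaryMeasure p).toReal := by
  refine ae_eq_rnDeriv_sub_rnDeriv
    (Measure.absolutelyContinuous_of_le (arcMeasure_le_fanBoundaryMeasure 0))
    (Measure.absolutelyContinuous_of_le (arcMeasure_le_fanBoundaryMeasure 1))
    (integrable_normalTrace hntz) fun v hv _ => ?_
  rw [← hntz v (contDiff_infty.1 hv 1), setIntegral_inner_fanField_gradient (contDiff_infty.1 hv 1)]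

lemma abs_normalTrace_le_one (hntz : IsNormalTrace ntz) :
    ∀ᵐ p ∂fanBoundaryMeasure, |ntz p| ≤ 1 := by
  have hle (i : Fin 2) := Measure.rnDeriv_le_one_of_le (arcMeasure_le_fanBoundaryMeasure i)
  filter_upwards [normalTrace_ae_eq hntz, hle 0, hle 1] with p hp h0 h1
  rw [hp]
  exact abs_sub_le_of_nonneg_of_le ENNReal.toReal_nonneg (ENNReal.toReal_le_of_le_ofReal
    zero_le_one (by simpa using h0)) ENNReal.toReal_nonneg
    (ENNReal.toReal_le_of_le_ofReal zero_le_one (by simpa using h1))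

lemma normalTrace_eq_zero (hntz : IsNormalTrace ntz) :
    ∀ᵐ p ∂fanBoundaryMeasure, 0 ≤ p 0 → 0 ≤ p 1 → ntz p = 0 := by
  have hmeas (i : Fin 2) : MeasurableSet {p : E2 | 0 ≤ p i} :=
    (isClosed_le continuous_const (by fun_prop)).measurableSet
  have hzero (i : Fin 2) := ae_rnDeriv_eq_zero_of_measure_eq_zero (ν := fanBoundaryMeasure)
    (hmeas i) (arcMeasure_setOf_nonneg i)
  filter_upwards [normalTrace_ae_eq hntz, hzero 0, hzero 1] with p hp h0 h1 hp0 hp1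
  simp [hp, h0 hp0, h1 hp1]

end NormalTrace

section Trace

variable {g : ℝ → ℝ} {p : E2} {T : ℝ}

lemma fanFunction_eq_one (hp : p ∈ fanDomain) (h : p 0 < 0) : fanFunction g p = 1 := by
  have htheta := pi_div_two_lt_theta_of_mem_fanCap ⟨hp, h⟩
  rw [fanFunction, if_neg (by linarith [pi_pos]), if_neg htheta.not_ge]

lemma fanFunction_eq_zero (h : p 1 < 0) : fanFunction g p = 0 :=
  if_pos (theta_neg_iff.2 h)

theorem trace_fanFunction_eq (hp : p ∈ closure fanDomain) (hneg : p 0 * p 1 < 0)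
    (hT : Tendsto (fun r => (∫ y in Metric.ball p r ∩ fanDomain, |fanFunction g y - T|) /
      (volume (Metric.ball p r ∩ fanDomain)).toReal) (𝓝[>] 0) (𝓝 0)) :
    T = if p 0 < 0 then 1 else 0 := by
  have hnear {i : Fin 2} (h : p i < 0) : ∀ᶠ y : E2 in 𝓝 p, y i < 0 :=
    (isOpen_lt (by fun_prop) continuous_const).mem_nhds h
  refine eq_of_tendsto_average_abs_sub isOpen_fanDomain hp ?_ hT
  split_ifs with h0
  · exact (hnear h0).mono fun y hy hyΩ => fanFunction_eq_one hyΩ hy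
  · have h1 : p 1 < 0 := neg_of_mul_neg_right hneg (not_lt.1 h0)
    exact (hnear h1).mono fun y hy _ => fanFunction_eq_zero hy

end Trace

/-- Nonuniqueness of level-set structure (Example 4.7). On the
domain `Ω` built from the quarter-disk `B(0,2) ∩ {x,y>0}` together with
`B((2,1),√5) ∩ {x≤0}` and `B((1,2),√5) ∩ {y≤0}`, with `Γ = ∂Ω ∩ ({xy<0} ∪ {0})`
and `f = 1` for `x<0`, `f = 0` for `x>0`, every function
`u(r,θ) = 0` for `θ<0`, `g(θ)` for `θ∈[0,π/2]`, `1` for `θ>π/2` (with `g`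
nondecreasing from `[0,π/2]` to `[0,1]`) satisfies the 1-Laplace conditions with
the vector field `z = (0,1)` for `θ<0`, `ê_θ` for `θ∈[0,π/2]`, `(−1,0)` for
`θ>π/2`. The measures `|Du|`, `(z,Du)`, the trace `Tu` and the normal trace
`[z,ν]` are characterized by their defining properties, stated as hypotheses. -/
theorem fan_example_oneLaplace
    (Ω : Set E2)
    (hΩ : Ω = (Metric.ball (0 : E2) 2 ∩ {p : E2 | 0 < p 0 ∧ 0 < p 1}) ∪
      (Metric.ball (EuclideanSpace.single (0 : Fin 2) (2:ℝ) +
        EuclideanSpace.single (1 : Fin 2) (1:ℝ)) (Real.sqrt 5) ∩ {p : E2 | p 0 ≤ 0}) ∪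
      (Metric.ball (EuclideanSpace.single (0 : Fin 2) (1:ℝ) +
        EuclideanSpace.single (1 : Fin 2) (2:ℝ)) (Real.sqrt 5) ∩ {p : E2 | p 1 ≤ 0}))
    (Γ : Set E2) (hΓ : Γ = frontier Ω ∩ ({p : E2 | p 0 * p 1 < 0} ∪ {0}))
    (f : E2 → ℝ) (hf : f = fun p => if p 0 < 0 then (1:ℝ) else 0)
    (σ : Measure E2) (hσ : σ = (μH[1]).restrict (frontier Ω))
    (g : ℝ → ℝ) (hg : MonotoneOn g (Icc 0 (π/2)))
    (hg01 : ∀ y ∈ Icc (0:ℝ) (π/2), g y ∈ Icc (0:ℝ) 1)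
    (u : E2 → ℝ) (hu : u = fun p => if theta p < 0 then 0
      else if theta p ≤ π/2 then g (theta p) else 1)
    (z : E2 → E2) (hz : z = fun p => if theta p < 0 then
        EuclideanSpace.single (1 : Fin 2) (1:ℝ)
      else if theta p ≤ π/2 then ‖p‖⁻¹ • rot p
      else EuclideanSpace.single (0 : Fin 2) (-1:ℝ))
    -- the total variation measure |Du| on Ω, via the defining sup formula
    (TVμ : Measure E2) (hTVc : TVμ Ωᶜ = 0)
    (hTV : ∀ A : Set E2, IsOpen A → A ⊆ Ω →
      TVμ A = ⨆ w : {w : E2 → E2 // ContDiff ℝ 1 w ∧ HasCompactSupport w ∧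
          tsupport w ⊆ A ∧ ∀ x, ‖w x‖ ≤ 1},
        ENNReal.ofReal (∫ x in A, u x * div2 w.1 x))
    -- the Anzellotti pairing measure (z,Du), via its distributional definition
    (πz : Measure E2) (hπc : πz Ωᶜ = 0)
    (hπ : ∀ ϕ : E2 → ℝ, ContDiff ℝ (⊤ : ℕ∞) ϕ → HasCompactSupport ϕ → tsupport ϕ ⊆ Ω →
      ∫ x, ϕ x ∂πz = -∫ x in Ω, u x * ⟪z x, gradient ϕ x⟫)
    -- the BV boundary trace of u, via its a.e. averaged characterization
    (Tu : E2 → ℝ)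
    (hTu : ∀ᵐ p ∂σ, Tendsto
      (fun r => (∫ y in Metric.ball p r ∩ Ω, |u y - Tu p|) /
        (volume (Metric.ball p r ∩ Ω)).toReal) (nhdsWithin 0 (Ioi 0)) (nhds 0))
    -- the normal trace [z,ν], via Anzellotti's Green formula (div z = 0)
    (ntz : E2 → ℝ)
    (hntz : ∀ v : E2 → ℝ, ContDiff ℝ 1 v →
      ∫ x in Ω, ⟪z x, gradient v x⟫ = ∫ x, ntz x * v x ∂σ) :
    (∀ p ∈ Ω, ‖z p‖ ≤ 1) ∧
    DivFreeOn Ω z ∧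
    (∀ A : Set E2, MeasurableSet A → A ⊆ Ω → πz A = TVμ A) ∧
    (∀ᵐ x ∂σ.restrict Γ, |ntz x| ≤ 1 ∧ ntz x * (f x - Tu x) = |f x - Tu x|) ∧
    (∀ᵐ x ∂σ.restrict (frontier Ω \ Γ), ntz x = 0) := by
  obtain rfl : Ω = fanDomain := hΩ
  obtain rfl : z = fanField := hz
  obtain rfl : u = fanFunction g := hu
  obtain rfl : σ = fanBoundaryMeasure := hσ
  have hΓmeas : MeasurableSet Γ := hΓ ▸ isClosed_frontier.measurableSet.inter
    ((isOpen_lt (by fun_prop) continuous_const).measurableSet.union (measurableSet_singleton 0))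
  refine ⟨fun p _ => norm_fanField_le_one p, divFreeOn_fanField,
    fun A _ hAΩ => pairing_eq_totalVariation hg hg01 hTV hπ hAΩ, ?_, ?_⟩
  · rw [ae_restrict_iff' hΓmeas]
    filter_upwards [abs_normalTrace_le_one hntz, hTu, ae_ne_fanBoundaryMeasure 0]
      with p hntz1 hT hp0 hp
    obtain ⟨hfrontier, hneg | hp⟩ := hΓ ▸ hp
    · have hTf : Tu p = f p := by
        rw [hf, trace_fanFunction_eq (frontier_subset_closure hfrontier) hneg hT]
      simp [hTf, hntz1]
    · exact absurd hp hp0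
  · rw [ae_restrict_iff' (isClosed_frontier.measurableSet.diff hΓmeas)]
    filter_upwards [normalTrace_eq_zero hntz] with p hzero ⟨hfrontier, hpΓ⟩
    have hnonneg (i : Fin 2) : 0 ≤ p i := not_lt.1 fun h => hpΓ <| hΓ ▸ ⟨hfrontier,
      .inl (mul_neg_of_mem_closure_fanDomain (frontier_subset_closure hfrontier) h)⟩
    exact hzero (hnonneg 0) (hnonneg 1)
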